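/- arXiv:1812.10415 — 8 statements merged into one kernel-verified Lean document; each statement's English description precedes it below -/
import Mathlib

section
/- Let D be a nonzero fourth-power-free integer and let E_D be the elliptic curve over ℚ with Weierstrass equation y² = x³ + D·x. Then the torsion subgroup of E_D(ℚ) is isomorphic to ℤ/4ℤ if D = 4, isomorphic to ℤ/2ℤ × ℤ/2ℤ if −D is a perfect square, and isomorphic to ℤ/2ℤ otherwise. -/
/-- The elliptic curve `E_D : y² = x³ + D·x` over `ℚ`, as an affine Weierstrass curve. -/
def EDcurve (D : ℚ) : WeierstrassCurve.Affine ℚ := ⟨0, 0, 0, D, 0⟩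

/-!
On `y² = x³ + D·x`, doubling a point gives `x(2P) = ((x² - D) / (2y))²`. If `x ≠ 0` and
`2·v₂(x) < v₂(D)`, this formula reads `v₂(x(2P)) = v₂(x) - 2`, so repeated doubling lowers `v₂(x)`
for ever and `P` has infinite order. Every other point with `y ≠ 0` and `v₂(x)` even lands in that
region after one doubling, hence is not torsion either. If `P` is torsion, this applies to `2P`,
whose `x`-coordinate is a square: either `x(2P) = 0`, that is `x² = D`, or `y(2P) = 0`, and the
latter with `x(2P) = s² ≠ 0` gives `(x - s²)² = 2s⁴`, which is impossible. So a torsion point has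
`y = 0` or `x² = D`, and the second case forces `D = 4·(y / 2x)⁴`.
-/

local notation "v₂" => padicValRat 2

theorem not_isOfFinAddOrder_of_add_self_lt {A α : Type*} [AddMonoid A] [LinearOrder α] {S : Set A}
    {f : A → α} (hS : ∀ a ∈ S, a + a ∈ S) (hf : ∀ a ∈ S, f (a + a) < f a) {a : A} (ha : a ∈ S) :
    ¬ IsOfFinAddOrder a := by
  intro hfin
  obtain ⟨b, ⟨hba, hbS⟩, hmin⟩ := Set.exists_min_image _ f
    (hfin.finite_multiples.inter_of_left S) ⟨a, AddSubmonoid.mem_multiples a, ha⟩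
  exact (hmin (b + b) ⟨add_mem hba hba, hS b hbS⟩).not_gt (hf b hbS)

theorem isAddKleinFour_of_card_eq_four {G : Type*} [AddGroup G] (hcard : Nat.card G = 4)
    (htwo : ∀ g : G, 2 • g = 0) : IsAddKleinFour G := by
  refine ⟨hcard, ?_⟩
  have hdvd := AddMonoid.exponent_dvd_of_forall_nsmul_eq_zero htwo
  refine ((Nat.dvd_prime Nat.prime_two).mp hdvd).resolve_left fun hone => ?_
  have : Subsingleton G := AddMonoid.exp_eq_one_iff.mp hone
  rw [Nat.card_of_subsingleton (0 : G)] at hcard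
  omega

section Valuation

variable {p : ℕ}

theorem add_ne_zero_of_padicValRat_ne {a b : ℚ} (h : padicValRat p a ≠ padicValRat p b) :
    a + b ≠ 0 := by
  intro hab
  rw [eq_neg_of_add_eq_zero_left hab, padicValRat.neg] at h
  exact h rfl

variable [hp : Fact p.Prime]

theorem not_dvd_den_of_padicValRat_eq_zero {r : ℚ} (h : padicValRat p r = 0) : ¬ p ∣ r.den := by
  intro hden
  have hnum : ¬ (p : ℤ) ∣ r.num := fun hnum =>
    Nat.not_coprime_of_dvd_of_dvd hp.out.one_lt (Int.natCast_dvd.mp hnum) hden r.reduced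
  have := one_le_padicValNat_of_dvd r.den_ne_zero hden
  rw [padicValRat_def, padicValInt.eq_zero_of_not_dvd hnum] at h
  omega

theorem not_dvd_num_of_padicValRat_eq_zero {r : ℚ} (hr : r ≠ 0) (h : padicValRat p r = 0) :
    ¬ (p : ℤ) ∣ r.num := by
  rw [padicValRat_def, padicValNat.eq_zero_of_not_dvd (not_dvd_den_of_padicValRat_eq_zero h),
    Nat.cast_zero, sub_zero, Nat.cast_eq_zero, padicValInt.eq_zero_iff] at h
  exact (h.resolve_left hp.out.ne_one).resolve_left (Rat.num_ne_zero.mpr hr)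

theorem padicValRat_two_add_one_pos {r : ℚ} (hr : r ≠ 0) (h : v₂ r = 0) (hr1 : r + 1 ≠ 0) :
    0 < v₂ (r + 1) := by
  have hnum : ¬ (2 : ℤ) ∣ r.num := not_dvd_num_of_padicValRat_eq_zero hr h
  have hden : ¬ 2 ∣ r.den := not_dvd_den_of_padicValRat_eq_zero h
  have heq : r + 1 = (r.num + r.den : ℤ) / (r.den : ℕ) := by
    have := r.den_ne_zero
    conv_lhs => rw [← Rat.num_div_den r]
    push_cast
    field_simp
  have hne : r.num + r.den ≠ 0 := fun h0 => hr1 (by rw [heq, h0, Int.cast_zero, zero_div])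
  have hdvd : ((2 : ℕ) : ℤ) ^ 1 ∣ r.num + r.den := by
    rw [pow_one]
    omega
  have hsum := ((padicValInt_dvd_iff 1 _).mp hdvd).resolve_left hne
  rw [heq, padicValRat.div (mod_cast hne) (mod_cast r.den_ne_zero), padicValRat.of_int,
    padicValRat.of_nat, padicValNat.eq_zero_of_not_dvd hden]
  omega

theorem padicValRat_two_lt_add {a b : ℚ} (ha : a ≠ 0) (hb : b ≠ 0) (hab : a + b ≠ 0)
    (h : v₂ a = v₂ b) : v₂ b < v₂ (a + b) := by
  have hsum : a + b = b * (a / b + 1) := by field_simp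
  have hunit : v₂ (a / b) = 0 := by rw [padicValRat.div ha hb, h, sub_self]
  have hne : a / b + 1 ≠ 0 := right_ne_zero_of_mul (hsum ▸ hab)
  have := padicValRat_two_add_one_pos (div_ne_zero ha hb) hunit hne
  rw [hsum, padicValRat.mul hb hne]
  omega

theorem padicValRat_two_mul {a : ℚ} (ha : a ≠ 0) : v₂ (2 * a) = 1 + v₂ a := by
  rw [padicValRat.mul two_ne_zero ha]
  exact congrArg (· + v₂ a) (padicValRat.self one_lt_two)

end Valuation

namespace EDcurve

open WeierstrassCurve.Affine

variable {D : ℚ}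

/-- The `x`-coordinate of a point of `E_D`, with value `0` at the point at infinity. Since `(0, 0)`
lies on the curve, the curve equation holds for `xCoord P` and `yCoord P` at every point `P`. -/
def xCoord : (EDcurve D).Point → ℚ
  | .zero => 0
  | .some x _ _ => x

/-- The `y`-coordinate of a point of `E_D`, with value `0` at the point at infinity, so that the
points with `yCoord P = 0` are exactly those killed by `2`. -/
def yCoord : (EDcurve D).Point → ℚ
  | .zero => 0
  | .some _ y _ => y

theorem equation_iff (x y : ℚ) : (EDcurve D).Equation x y ↔ y ^ 2 = x ^ 3 + D * x := by
  simp [WeierstrassCurve.Affine.equation_iff, EDcurve]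

theorem nonsingular_iff (hD : D ≠ 0) (x y : ℚ) :
    (EDcurve D).Nonsingular x y ↔ y ^ 2 = x ^ 3 + D * x := by
  rw [← equation_iff_nonsingular_of_Δ_ne_zero, equation_iff]
  simp [EDcurve, WeierstrassCurve.Δ, WeierstrassCurve.b₂, WeierstrassCurve.b₄, WeierstrassCurve.b₆,
    WeierstrassCurve.b₈, hD]

theorem yCoord_sq (P : (EDcurve D).Point) : yCoord P ^ 2 = xCoord P ^ 3 + D * xCoord P := by
  rcases P with _ | ⟨x, y, h⟩
  · simp [xCoord, yCoord]
  · exact (equation_iff x y).mp h.1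

theorem eq_negY_iff (x y : ℚ) : y = (EDcurve D).negY x y ↔ y = 0 := by
  simp only [negY, EDcurve]
  grind

theorem add_self_eq_zero_iff {P : (EDcurve D).Point} : P + P = 0 ↔ yCoord P = 0 := by
  rcases P with _ | ⟨x, y, h⟩
  · exact iff_of_true (add_zero _) rfl
  · rw [add_eq_zero_iff_eq_neg, Point.neg_some, Point.some.injEq, eq_negY_iff]
    exact and_iff_right rfl

-- When `2P = O` both sides are `0`: the right-hand side through division by zero.
theorem xCoord_add_self (P : (EDcurve D).Point) :
    xCoord (P + P) = ((xCoord P ^ 2 - D) / (2 * yCoord P)) ^ 2 := by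
  by_cases hy : yCoord P = 0
  · rw [add_self_eq_zero_iff.mpr hy, hy]
    simp [xCoord]
  rcases P with _ | ⟨x, y, h⟩
  · exact absurd rfl hy
  have he : y ^ 2 = x ^ 3 + D * x := (equation_iff x y).mp h.1
  have hne : y ≠ (EDcurve D).negY x y := (eq_negY_iff x y).not.mpr hy
  rw [Point.add_self_of_Y_ne hne]
  change (EDcurve D).addX x x _ = ((x ^ 2 - D) / (2 * y)) ^ 2
  change y ≠ 0 at hy
  rw [slope_of_Y_ne rfl hne]
  simp only [addX, negY, EDcurve]
  field_simp
  grind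

theorem isOfFinAddOrder_of_yCoord_eq_zero {P : (EDcurve D).Point} (hy : yCoord P = 0) :
    IsOfFinAddOrder P :=
  isOfFinAddOrder_iff_nsmul_eq_zero.mpr
    ⟨2, two_pos, (two_nsmul P).trans (add_self_eq_zero_iff.mpr hy)⟩

section Descent

variable {P : (EDcurve D).Point}

theorem xCoord_add_self_ne_zero (hy : yCoord P ≠ 0) (hxD : xCoord P ^ 2 - D ≠ 0) :
    xCoord (P + P) ≠ 0 := by
  rw [xCoord_add_self]
  exact pow_ne_zero 2 (div_ne_zero hxD (mul_ne_zero two_ne_zero hy))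

theorem two_mul_padicValRat_yCoord (hy : yCoord P ≠ 0) :
    2 * v₂ (yCoord P) = v₂ (xCoord P) + v₂ (xCoord P ^ 2 + D) := by
  have hfac : yCoord P ^ 2 = xCoord P * (xCoord P ^ 2 + D) := by rw [yCoord_sq]; ring
  have hne : xCoord P * (xCoord P ^ 2 + D) ≠ 0 := hfac ▸ pow_ne_zero 2 hy
  rw [← padicValRat.mul (left_ne_zero_of_mul hne) (right_ne_zero_of_mul hne), ← hfac,
    padicValRat.pow, Nat.cast_ofNat]

theorem padicValRat_xCoord_add_self (hy : yCoord P ≠ 0) (hxD : xCoord P ^ 2 - D ≠ 0) :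
    v₂ (xCoord (P + P)) =
      2 * v₂ (xCoord P ^ 2 - D) - 2 - v₂ (xCoord P) - v₂ (xCoord P ^ 2 + D) := by
  have := two_mul_padicValRat_yCoord hy
  rw [xCoord_add_self, padicValRat.pow, padicValRat.div hxD (mul_ne_zero two_ne_zero hy),
    padicValRat_two_mul hy]
  push_cast
  omega

theorem padicValRat_xCoord_add_self_of_ne (hD : D ≠ 0) (hx : xCoord P ≠ 0)
    (hne : 2 * v₂ (xCoord P) ≠ v₂ D) :
    xCoord (P + P) ≠ 0 ∧
      v₂ (xCoord (P + P)) = min (2 * v₂ (xCoord P)) (v₂ D) - v₂ (xCoord P) - 2 := by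
  have hx2 : xCoord P ^ 2 ≠ 0 := pow_ne_zero 2 hx
  have hvx2 : v₂ (xCoord P ^ 2) = 2 * v₂ (xCoord P) := padicValRat.pow _
  have hvneg : v₂ (-D) = v₂ D := padicValRat.neg D
  have hadd : xCoord P ^ 2 + D ≠ 0 := add_ne_zero_of_padicValRat_ne (by rwa [hvx2])
  have hsub : xCoord P ^ 2 + -D ≠ 0 := add_ne_zero_of_padicValRat_ne (by rwa [hvx2, hvneg])
  have hvadd := padicValRat.add_eq_min hadd hx2 hD (by rwa [hvx2])
  have hvsub := padicValRat.add_eq_min hsub hx2 (neg_ne_zero.mpr hD) (by rwa [hvx2, hvneg])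
  rw [← sub_eq_add_neg] at hsub hvsub
  have hy : yCoord P ≠ 0 := by
    intro hy
    have := yCoord_sq P
    exact mul_ne_zero hx hadd (by rw [hy] at this; linear_combination -this)
  refine ⟨xCoord_add_self_ne_zero hy hsub, ?_⟩
  rw [padicValRat_xCoord_add_self hy hsub, hvadd, hvsub, hvx2, hvneg]
  omega

theorem padicValRat_xCoord_add_self_of_eq (hD : D ≠ 0) (hx : xCoord P ≠ 0) (hy : yCoord P ≠ 0)
    (heven : Even (v₂ (xCoord P))) (heq : 2 * v₂ (xCoord P) = v₂ D) :
    xCoord (P + P) ≠ 0 ∧ 2 * v₂ (xCoord (P + P)) < v₂ D := by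
  have hx2 : xCoord P ^ 2 ≠ 0 := pow_ne_zero 2 hx
  have hvx2 : v₂ (xCoord P ^ 2) = 2 * v₂ (xCoord P) := padicValRat.pow _
  have hadd : xCoord P ^ 2 + D ≠ 0 := by
    intro h0
    refine hy (pow_eq_zero_iff two_ne_zero |>.mp ?_)
    rw [yCoord_sq]
    linear_combination xCoord P * h0
  have hvadd : v₂ D + 2 ≤ v₂ (xCoord P ^ 2 + D) := by
    have hlt := padicValRat_two_lt_add hx2 hD hadd (hvx2.trans heq)
    have hparity := two_mul_padicValRat_yCoord hy
    obtain ⟨k, hk⟩ := heven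
    omega
  -- `x² - D` has valuation exactly `v₂ D + 1`, being the difference of `2x²` and `x² + D`.
  have hdiff : xCoord P ^ 2 - D = 2 * xCoord P ^ 2 + -(xCoord P ^ 2 + D) := by ring
  have hlt : v₂ (2 * xCoord P ^ 2) < v₂ (-(xCoord P ^ 2 + D)) := by
    rw [padicValRat_two_mul hx2, padicValRat.neg]
    omega
  have hsub : xCoord P ^ 2 - D ≠ 0 := hdiff ▸ add_ne_zero_of_padicValRat_ne hlt.ne
  have hvsub : v₂ (xCoord P ^ 2 - D) = v₂ D + 1 := by
    rw [hdiff, padicValRat.add_eq_of_lt (hdiff ▸ hsub) (mul_ne_zero two_ne_zero hx2)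
      (neg_ne_zero.mpr hadd) hlt, padicValRat_two_mul hx2]
    omega
  refine ⟨xCoord_add_self_ne_zero hy hsub, ?_⟩
  rw [padicValRat_xCoord_add_self hy hsub]
  omega

theorem not_isOfFinAddOrder_of_padicValRat_lt (hD : D ≠ 0) (hx : xCoord P ≠ 0)
    (hlt : 2 * v₂ (xCoord P) < v₂ D) : ¬ IsOfFinAddOrder P := by
  have hdouble (Q : (EDcurve D).Point) (hQ : xCoord Q ≠ 0 ∧ 2 * v₂ (xCoord Q) < v₂ D) :
      xCoord (Q + Q) ≠ 0 ∧ v₂ (xCoord (Q + Q)) = v₂ (xCoord Q) - 2 := by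
    have ⟨hne, hval⟩ := padicValRat_xCoord_add_self_of_ne hD hQ.1 hQ.2.ne
    exact ⟨hne, by omega⟩
  refine not_isOfFinAddOrder_of_add_self_lt
    (S := {Q | xCoord Q ≠ 0 ∧ 2 * v₂ (xCoord Q) < v₂ D}) (f := fun Q => v₂ (xCoord Q))
    (fun Q hQ => ⟨(hdouble Q hQ).1, ?_⟩) (fun Q hQ => ?_) ⟨hx, hlt⟩
  · have := hQ.2
    have := (hdouble Q hQ).2
    omega
  · have := (hdouble Q hQ).2
    omega

theorem yCoord_eq_zero_of_even_padicValRat (hD : D ≠ 0) (hP : IsOfFinAddOrder P)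
    (hx : xCoord P ≠ 0) (heven : Even (v₂ (xCoord P))) : yCoord P = 0 := by
  by_contra hy
  suffices hdouble : xCoord (P + P) ≠ 0 ∧ 2 * v₂ (xCoord (P + P)) < v₂ D from
    not_isOfFinAddOrder_of_padicValRat_lt hD hdouble.1 hdouble.2 (hP.add hP)
  rcases lt_trichotomy (2 * v₂ (xCoord P)) (v₂ D) with hlt | heq | hgt
  · exact absurd hP (not_isOfFinAddOrder_of_padicValRat_lt hD hx hlt)
  · exact padicValRat_xCoord_add_self_of_eq hD hx hy heven heq
  · have ⟨hne, hval⟩ := padicValRat_xCoord_add_self_of_ne hD hx hgt.ne'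
    exact ⟨hne, by omega⟩

theorem xCoord_add_self_eq_zero_of_yCoord_add_self_eq_zero (h : yCoord (P + P) = 0) :
    xCoord (P + P) = 0 := by
  set s := (xCoord P ^ 2 - D) / (2 * yCoord P) with hs
  have hX : xCoord (P + P) = s ^ 2 := xCoord_add_self P
  by_contra hne
  have hs0 : s ≠ 0 := fun h0 => hne (by rw [hX, h0, zero_pow two_ne_zero])
  have hy : yCoord P ≠ 0 := fun h0 => hs0 (by rw [hs, h0, mul_zero, div_zero])
  have hs4 : D = -s ^ 4 := by
    have hcurve := yCoord_sq (P + P)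
    rw [h, hX] at hcurve
    have : s ^ 2 * (s ^ 4 + D) = 0 := by linear_combination -hcurve
    linear_combination (mul_eq_zero.mp this).resolve_left (pow_ne_zero 2 hs0)
  have hslope : s * (2 * yCoord P) = xCoord P ^ 2 - D :=
    div_mul_cancel₀ _ (mul_ne_zero two_ne_zero hy)
  -- With `D = -s⁴`, the relation `(x² - D)² = 4s²y²` becomes `(x² - 2s²x - s⁴)² = 0`.
  have hquad : (xCoord P ^ 2 - 2 * s ^ 2 * xCoord P - s ^ 4) ^ 2 = 0 := by
    linear_combination (2 * xCoord P ^ 2 + s ^ 4 - D + 4 * s ^ 2 * xCoord P) * hs4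
      - (2 * s * yCoord P + xCoord P ^ 2 - D) * hslope + 4 * s ^ 2 * yCoord_sq P
  have hcomplete : (xCoord P - s ^ 2) ^ 2 = 2 * s ^ 4 := by
    linear_combination (pow_eq_zero_iff two_ne_zero).mp hquad
  have htwo : IsSquare (2 : ℚ) := by
    refine ⟨(xCoord P - s ^ 2) / s ^ 2, ?_⟩
    field_simp
    linear_combination -hcomplete
  exact Nat.prime_two.prime.not_isSquare (Rat.isSquare_natCast_iff.mp htwo)

theorem yCoord_eq_zero_or_xCoord_sq_eq (hD : D ≠ 0) (hP : IsOfFinAddOrder P) :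
    yCoord P = 0 ∨ xCoord P ^ 2 = D := by
  by_contra! ⟨hy, hxD⟩
  have hne : xCoord (P + P) ≠ 0 := xCoord_add_self_ne_zero hy (sub_ne_zero.mpr hxD)
  have heven : Even (v₂ (xCoord (P + P))) := by
    rw [xCoord_add_self, padicValRat.pow]
    exact even_two_mul _
  exact hne (xCoord_add_self_eq_zero_of_yCoord_add_self_eq_zero
    (yCoord_eq_zero_of_even_padicValRat hD (hP.add hP) hne heven))

theorem eq_four_mul_pow_four_of_xCoord_sq_eq (hD : D ≠ 0) (hxD : xCoord P ^ 2 = D) :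
    D = 4 * (yCoord P / (2 * xCoord P)) ^ 4 := by
  have hx : xCoord P ≠ 0 := by
    rintro hx
    exact hD (by rw [← hxD, hx, zero_pow two_ne_zero])
  have hy : yCoord P ^ 2 = 2 * xCoord P ^ 3 := by
    rw [yCoord_sq]
    linear_combination -xCoord P * hxD
  calc D = xCoord P ^ 2 := hxD.symm
    _ = 4 * (2 * xCoord P ^ 3) ^ 2 / (2 * xCoord P) ^ 4 := by field_simp; norm_num
    _ = 4 * (yCoord P / (2 * xCoord P)) ^ 4 := by rw [← hy]; ring

theorem yCoord_eq_zero_of_isOfFinAddOrder (hD : D ≠ 0) (h4 : ¬ ∃ u : ℚ, D = 4 * u ^ 4)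
    (hP : IsOfFinAddOrder P) : yCoord P = 0 :=
  (yCoord_eq_zero_or_xCoord_sq_eq hD hP).resolve_right fun hxD =>
    h4 ⟨_, eq_four_mul_pow_four_of_xCoord_sq_eq hD hxD⟩

end Descent

section TwoTorsion

theorem card_torsion_eq_card_roots_add_one (hD : D ≠ 0) (s : Finset ℚ)
    (hs : ∀ x, x ∈ s ↔ x ^ 3 + D * x = 0)
    (htors : ∀ P : (EDcurve D).Point, IsOfFinAddOrder P → yCoord P = 0) :
    Nat.card (AddCommGroup.torsion (EDcurve D).Point) = s.card + 1 := by
  have hns (x : s) : (EDcurve D).Nonsingular x 0 := by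
    rw [nonsingular_iff hD, (hs x).mp x.2, zero_pow two_ne_zero]
  let f : Option s → AddCommGroup.torsion (EDcurve D).Point := fun o =>
    o.elim 0 fun x => ⟨.some x 0 (hns x), isOfFinAddOrder_of_yCoord_eq_zero rfl⟩
  have hinj : f.Injective := by
    rintro (_ | x) (_ | x') h
    · rfl
    · cases congrArg Subtype.val h
    · cases congrArg Subtype.val h
    · exact congrArg some (Subtype.ext (Point.some.inj (congrArg Subtype.val h)).1)
  have hsurj : f.Surjective := by
    rintro ⟨_ | ⟨x, y, h⟩, hP⟩
    · exact ⟨none, rfl⟩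
    · obtain rfl : y = 0 := htors _ hP
      have hx : x ∈ s := by
        rw [hs, ← (nonsingular_iff hD x 0).mp h, zero_pow two_ne_zero]
      exact ⟨some ⟨x, hx⟩, rfl⟩
  rw [← Nat.card_eq_of_bijective f ⟨hinj, hsurj⟩, Finite.card_option, Nat.card_eq_finsetCard]

theorem nonempty_torsion_addEquiv_zmod_two (hD : D ≠ 0) (h4 : ¬ ∃ u : ℚ, D = 4 * u ^ 4)
    (hsq : ¬ IsSquare (-D)) :
    Nonempty (AddCommGroup.torsion (EDcurve D).Point ≃+ ZMod 2) := by
  have hroots (x : ℚ) : x ∈ ({0} : Finset ℚ) ↔ x ^ 3 + D * x = 0 := by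
    have : x ^ 2 + D ≠ 0 := fun h => hsq ⟨x, by linear_combination -h⟩
    rw [Finset.mem_singleton, show x ^ 3 + D * x = x * (x ^ 2 + D) by ring, mul_eq_zero,
      or_iff_left this]
  have hcard := card_torsion_eq_card_roots_add_one hD {0} hroots
    fun _ => yCoord_eq_zero_of_isOfFinAddOrder hD h4
  have := isAddCyclic_of_prime_card (p := 2) hcard
  exact ⟨addEquivOfAddCyclicCardEq (by rw [hcard, Nat.card_zmod]; rfl)⟩

theorem nonempty_torsion_addEquiv_zmod_two_prod (hD : D ≠ 0) (hsq : IsSquare (-D)) :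
    Nonempty (AddCommGroup.torsion (EDcurve D).Point ≃+ ZMod 2 × ZMod 2) := by
  obtain ⟨k, hk⟩ := hsq
  obtain rfl : D = -(k * k) := by rw [← hk, neg_neg]
  have hk0 : k ≠ 0 := by rintro rfl; simp at hD
  have htors (P : (EDcurve (-(k * k))).Point) (hP : IsOfFinAddOrder P) : yCoord P = 0 := by
    refine yCoord_eq_zero_of_isOfFinAddOrder hD ?_ hP
    rintro ⟨u, hu⟩
    have : 0 < k * k := mul_self_pos.mpr hk0
    have : 0 ≤ u ^ 4 := by positivity
    linarith
  have hroots (x : ℚ) : x ∈ ({0, k, -k} : Finset ℚ) ↔ x ^ 3 + -(k * k) * x = 0 := by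
    rw [show x ^ 3 + -(k * k) * x = x * ((x - k) * (x + k)) by ring]
    rw [Finset.mem_insert, Finset.mem_insert, Finset.mem_singleton, mul_eq_zero, mul_eq_zero,
      sub_eq_zero, add_eq_zero_iff_eq_neg]
  have hthree : ({0, k, -k} : Finset ℚ).card = 3 :=
    Finset.card_eq_three.mpr ⟨0, k, -k, hk0.symm, (neg_ne_zero.mpr hk0).symm,
      self_ne_neg.mpr hk0, rfl⟩
  have hcard := card_torsion_eq_card_roots_add_one hD _ hroots htors
  rw [hthree] at hcard
  have htwo (P : AddCommGroup.torsion (EDcurve (-(k * k))).Point) : 2 • P = 0 :=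
    Subtype.ext ((two_nsmul _).trans (add_self_eq_zero_iff.mpr (htors P P.2)))
  have := isAddKleinFour_of_card_eq_four hcard htwo
  exact IsAddKleinFour.nonempty_addEquiv

end TwoTorsion

section FourTorsion

variable {u : ℚ}

theorem yCoord_eq_zero_of_xCoord_eq_zero {P : (EDcurve D).Point} (hx : xCoord P = 0) :
    yCoord P = 0 := by
  have := yCoord_sq P
  rw [hx] at this
  exact pow_eq_zero_iff two_ne_zero |>.mp (by linarith)

theorem yCoord_add_self_eq_zero_of_xCoord_sq_eq {P : (EDcurve D).Point} (hxD : xCoord P ^ 2 = D) :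
    yCoord (P + P) = 0 := by
  apply yCoord_eq_zero_of_xCoord_eq_zero
  rw [xCoord_add_self, hxD, sub_self, zero_div, zero_pow two_ne_zero]

theorem eq_or_eq_neg_of_xCoord_eq {P Q : (EDcurve D).Point} (hP : P ≠ 0) (hQ : Q ≠ 0)
    (h : xCoord P = xCoord Q) : P = Q ∨ P = -Q := by
  rcases P with _ | _
  · exact absurd rfl hP
  rcases Q with _ | _
  · exact absurd rfl hQ
  exact Point.X_eq_iff.mp h

/-- The rational point `(2u², 4u³)` of order `4` on `y² = x³ + 4u⁴·x`, a generator of the torsion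
subgroup. -/
def fourTorsionPoint (hu : u ≠ 0) : (EDcurve (4 * u ^ 4)).Point :=
  .some (2 * u ^ 2) (4 * u ^ 3) ((nonsingular_iff (by positivity) _ _).mpr (by ring))

theorem fourTorsionPoint_add_self_ne_zero (hu : u ≠ 0) :
    fourTorsionPoint hu + fourTorsionPoint hu ≠ 0 :=
  add_self_eq_zero_iff.not.mpr (mul_ne_zero four_ne_zero (pow_ne_zero 3 hu))

theorem xCoord_fourTorsionPoint_sq (hu : u ≠ 0) :
    xCoord (fourTorsionPoint hu) ^ 2 = 4 * u ^ 4 := by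
  change (2 * u ^ 2) ^ 2 = 4 * u ^ 4
  ring

theorem addOrderOf_fourTorsionPoint (hu : u ≠ 0) : addOrderOf (fourTorsionPoint hu) = 4 := by
  refine addOrderOf_eq_prime_pow (p := 2) (n := 1) ?_ ?_
  · rw [pow_one, two_nsmul]
    exact fourTorsionPoint_add_self_ne_zero hu
  · rw [show 2 ^ (1 + 1) = 2 * 2 from rfl, mul_nsmul, two_nsmul, two_nsmul, add_self_eq_zero_iff]
    exact yCoord_add_self_eq_zero_of_xCoord_sq_eq (xCoord_fourTorsionPoint_sq hu)

theorem xCoord_eq_zero_or_eq_of_isOfFinAddOrder (hu : u ≠ 0) {P : (EDcurve (4 * u ^ 4)).Point}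
    (hP : IsOfFinAddOrder P) : xCoord P = 0 ∨ xCoord P = 2 * u ^ 2 := by
  have hD : 0 < 4 * u ^ 4 := by positivity
  have hcurve := yCoord_sq P
  rcases yCoord_eq_zero_or_xCoord_sq_eq hD.ne' hP with hy | hxD
  · left
    have : xCoord P * (xCoord P ^ 2 + 4 * u ^ 4) = 0 := by
      rw [hy] at hcurve
      linear_combination -hcurve
    exact (mul_eq_zero.mp this).resolve_right (by positivity)
  · right
    have hcube : yCoord P ^ 2 = 2 * xCoord P ^ 3 := by linear_combination hcurve - xCoord P * hxD
    have hnonneg : 0 ≤ xCoord P := by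
      have : 0 ≤ xCoord P ^ 3 := by linarith [sq_nonneg (yCoord P)]
      exact (Odd.pow_nonneg_iff (by decide)).mp this
    exact (pow_left_inj₀ hnonneg (by positivity) two_ne_zero).mp (hxD.trans (by ring))

theorem torsion_eq_zmultiples_fourTorsionPoint (hu : u ≠ 0) :
    AddCommGroup.torsion (EDcurve (4 * u ^ 4)).Point =
      AddSubgroup.zmultiples (fourTorsionPoint hu) := by
  set Q := fourTorsionPoint hu
  have hQ : Q ∈ AddSubgroup.zmultiples Q := AddSubgroup.mem_zmultiples Q
  have hQQ : Q + Q ≠ 0 := fourTorsionPoint_add_self_ne_zero hu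
  refine le_antisymm (fun P hP => ?_) ?_
  · by_cases hP0 : P = 0
    · exact hP0 ▸ zero_mem _
    obtain ⟨R, hR, hPR⟩ : ∃ R ∈ AddSubgroup.zmultiples Q, P = R ∨ P = -R := by
      rcases xCoord_eq_zero_or_eq_of_isOfFinAddOrder hu hP with hx | hx
      · refine ⟨Q + Q, add_mem hQ hQ, eq_or_eq_neg_of_xCoord_eq hP0 hQQ ?_⟩
        rw [hx, xCoord_add_self, xCoord_fourTorsionPoint_sq, sub_self, zero_div,
          zero_pow two_ne_zero]
      · exact ⟨Q, hQ, eq_or_eq_neg_of_xCoord_eq hP0 (Point.some_ne_zero _) hx⟩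
    rcases hPR with rfl | rfl
    exacts [hR, neg_mem hR]
  · have hfin : IsOfFinAddOrder Q := by
      rw [← addOrderOf_pos_iff, addOrderOf_fourTorsionPoint]
      exact four_pos
    exact AddSubgroup.zmultiples_le_of_mem hfin

theorem nonempty_torsion_addEquiv_zmod_four (hu : u ≠ 0) :
    Nonempty (AddCommGroup.torsion (EDcurve (4 * u ^ 4)).Point ≃+ ZMod 4) := by
  rw [torsion_eq_zmultiples_fourTorsionPoint hu]
  refine ⟨addEquivOfAddCyclicCardEq ?_⟩
  rw [Nat.card_zmultiples, addOrderOf_fourTorsionPoint, Nat.card_zmod]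

end FourTorsion

end EDcurve

theorem stmt1_general {D : ℚ} (hD : D ≠ 0) :
    ((∃ u : ℚ, D = 4 * u ^ 4) →
      Nonempty (AddCommGroup.torsion (EDcurve D).Point ≃+ ZMod 4)) ∧
    (IsSquare (-D) →
      Nonempty (AddCommGroup.torsion (EDcurve D).Point ≃+ ZMod 2 × ZMod 2)) ∧
    ((¬ ∃ u : ℚ, D = 4 * u ^ 4) → ¬ IsSquare (-D) →
      Nonempty (AddCommGroup.torsion (EDcurve D).Point ≃+ ZMod 2)) := by
  refine ⟨?_, EDcurve.nonempty_torsion_addEquiv_zmod_two_prod hD,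
    EDcurve.nonempty_torsion_addEquiv_zmod_two hD⟩
  rintro ⟨u, rfl⟩
  exact EDcurve.nonempty_torsion_addEquiv_zmod_four (by rintro rfl; simp at hD)

theorem exists_eq_four_mul_pow_four_iff {D : ℤ} (hfree : ∀ q : ℤ, Prime q → ¬ q ^ 4 ∣ D) :
    (∃ u : ℚ, (D : ℚ) = 4 * u ^ 4) ↔ D = 4 := by
  refine ⟨?_, fun h => ⟨1, by simp [h]⟩⟩
  rintro ⟨u, hu⟩
  obtain ⟨m, hm⟩ : ∃ m : ℤ, algebraMap ℤ ℚ m = 2 * u := by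
    refine IsIntegrallyClosed.exists_algebraMap_eq_of_isIntegral_pow four_pos ?_
    have : (2 * u) ^ 4 = algebraMap ℤ ℚ (4 * D) := by
      rw [eq_intCast, Int.cast_mul, hu, Int.cast_ofNat]
      ring
    rw [this]
    exact isIntegral_algebraMap
  have hm4 : m ^ 4 = 4 * D := by
    have : (m : ℚ) ^ 4 = 4 * D := by
      rw [hu, show (m : ℚ) = 2 * u from hm]
      ring
    exact_mod_cast this
  obtain ⟨k, rfl⟩ : Even m := by
    have : Even (m ^ 4) := ⟨2 * D, by rw [hm4]; ring⟩
    exact (Int.even_pow.mp this).1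
  have hk : D = 4 * k ^ 4 := by linarith
  have hunit : k.natAbs = 1 := by
    by_contra hk1
    obtain ⟨q, hq, hqk⟩ := Int.exists_prime_and_dvd hk1
    exact hfree q hq (hk ▸ (pow_dvd_pow_of_dvd hqk 4).mul_left 4)
  rcases Int.natAbs_eq_iff.mp hunit with rfl | rfl <;> simp [hk]

theorem isSquare_neg_intCast_iff {D : ℤ} : IsSquare (-(D : ℚ)) ↔ ∃ k : ℤ, -D = k ^ 2 := by
  rw [← Int.cast_neg, Rat.isSquare_intCast_iff, isSquare_iff_exists_sq]

/-- For `D` a nonzero fourth-power-free integer, the torsion subgroup of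
`E_D(ℚ)` is `ℤ/4ℤ` if `D = 4`, `ℤ/2ℤ × ℤ/2ℤ` if `-D` is a perfect square, and `ℤ/2ℤ`
otherwise. -/
theorem stmt1 (D : ℤ) (hD : D ≠ 0) (hfree : ∀ q : ℤ, Prime q → ¬ q ^ 4 ∣ D) :
    (D = 4 →
      Nonempty ((AddCommGroup.torsion (EDcurve (D : ℚ)).Point) ≃+ ZMod 4)) ∧
    ((∃ k : ℤ, -D = k ^ 2) →
      Nonempty ((AddCommGroup.torsion (EDcurve (D : ℚ)).Point) ≃+ (ZMod 2 × ZMod 2))) ∧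
    (D ≠ 4 → ¬ (∃ k : ℤ, -D = k ^ 2) →
      Nonempty ((AddCommGroup.torsion (EDcurve (D : ℚ)).Point) ≃+ ZMod 2)) := by
  rw [Ne, ← exists_eq_four_mul_pow_four_iff hfree, ← isSquare_neg_intCast_iff]
  exact stmt1_general (Int.cast_ne_zero.mpr hD)
end

section
/- Let A and B be abelian groups and let φ : A → B and ψ : B → A be group homomorphisms such that ψ ∘ φ is multiplication by 2 on A. Assume that the quotient B/φ(A), the quotient A/ψ(B), and the kernel of ψ are all finite. Then A/2A is finite and |A/2A| · |ker ψ| = |B/φ(A)| · |A/ψ(B)| · |φ(A[2])|, where A[2] denotes the 2-torsion subgroup of A. -/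
/- In abelian groups the sequence
`0 → ker ψ / φ(ker (ψ ∘ φ)) → B / φ(A) → C / ψφ(A) → C / ψ(B) → 0` is exact for every composable
pair `φ : A → B`, `ψ : B → C`, and the claim is the alternating product of its orders. The same
count holds for cosets in arbitrary groups: with `H = φ(A)` and `K = ker ψ`, both `[B : H]` and
`[C : ψ(H)]` split at `H + K`, where `[H + K : H] = [K : H ∩ K]`, and `H ∩ K = φ(ker (ψ ∘ φ))`. -/

section Subgroup

variable {B C : Type*} [AddGroup B] [AddGroup C] (H K : AddSubgroup B) (f : B →+ C)

theorem relIndex_sup_eq_relIndex_of_normal [K.Normal] : H.relIndex (H ⊔ K) = H.relIndex K := by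
  let ι := AddSubgroup.quotientAddSubgroupOfEmbeddingOfLE H (le_sup_right : K ≤ H ⊔ K)
  have ι_surjective : Function.Surjective ι := by
    -- Every coset of `H` in `H ⊔ K = K + H` has the form `(k + h) + H = k + H`.
    rintro ⟨x, hx⟩
    obtain ⟨k, hk, h, hh, rfl⟩ := AddSubgroup.mem_sup_of_normal_left.mp (sup_comm H K ▸ hx)
    refine ⟨QuotientAddGroup.mk ⟨k, hk⟩, QuotientAddGroup.eq.mpr ?_⟩
    simpa [AddSubgroup.mem_addSubgroupOf, ← add_assoc] using hh
  exact (Nat.card_congr (Equiv.ofBijective ι ⟨ι.injective, ι_surjective⟩)).symm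

theorem card_mul_relIndex {H K : AddSubgroup B} (hHK : H ≤ K) :
    Nat.card H * H.relIndex K = Nat.card K := by
  simpa only [AddSubgroup.relIndex_bot_left] using
    AddSubgroup.relIndex_mul_relIndex ⊥ H K bot_le hHK

theorem index_map_mul_relIndex_ker :
    (H.map f).index * H.relIndex f.ker = H.index * f.range.index :=
  calc (H.map f).index * H.relIndex f.ker
      = H.relIndex (H ⊔ f.ker) * (H ⊔ f.ker).index * f.range.index := by
        rw [H.index_map, relIndex_sup_eq_relIndex_of_normal]; ring
    _ = H.index * f.range.index := by rw [AddSubgroup.relIndex_mul_index le_sup_left]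

theorem finiteIndex_map [H.FiniteIndex] [f.range.FiniteIndex] : (H.map f).FiniteIndex := by
  have : (H ⊔ f.ker).FiniteIndex := AddSubgroup.finiteIndex_of_le le_sup_left
  exact ⟨H.index_map f ▸ mul_ne_zero AddSubgroup.FiniteIndex.index_ne_zero
    AddSubgroup.FiniteIndex.index_ne_zero⟩

end Subgroup

section Comp

variable {A B C : Type*} [AddGroup A] [AddGroup B] [AddGroup C] (φ : A →+ B) (ψ : B →+ C)

theorem map_ker_comp : (ψ.comp φ).ker.map φ = φ.range ⊓ ψ.ker := by
  rw [← AddMonoidHom.comap_ker, AddSubgroup.map_comap_eq]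

theorem map_ker_comp_le : (ψ.comp φ).ker.map φ ≤ ψ.ker :=
  map_ker_comp φ ψ ▸ inf_le_right

theorem index_range_comp_mul_relIndex :
    (ψ.comp φ).range.index * ((ψ.comp φ).ker.map φ).relIndex ψ.ker =
      φ.range.index * ψ.range.index := by
  rw [map_ker_comp, AddSubgroup.inf_relIndex_right, AddMonoidHom.range_comp,
    index_map_mul_relIndex_ker]

theorem stmt4_general (hφ : Finite (B ⧸ φ.range)) (hψ : Finite (C ⧸ ψ.range)) :
    Finite (C ⧸ (ψ.comp φ).range) ∧
      Nat.card (C ⧸ (ψ.comp φ).range) * ((ψ.comp φ).ker.map φ).relIndex ψ.ker =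
        Nat.card (B ⧸ φ.range) * Nat.card (C ⧸ ψ.range) := by
  have := φ.range.finiteIndex_of_finite_quotient
  have := ψ.range.finiteIndex_of_finite_quotient
  have : (ψ.comp φ).range.FiniteIndex := AddMonoidHom.range_comp ψ φ ▸ finiteIndex_map φ.range ψ
  exact ⟨inferInstance, index_range_comp_mul_relIndex φ ψ⟩

end Comp

/-- Descent identity. If `φ : A → B` and `ψ : B → A` are homomorphisms of abelian
groups with `ψ ∘ φ` equal to multiplication by `2` on `A`, and `B/φ(A)`, `A/ψ(B)` and `ker ψ`
are finite, then `A/2A` is finite and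
`|A/2A| · |ker ψ| = |B/φ(A)| · |A/ψ(B)| · |φ(A[2])|`. -/
theorem stmt4 {A B : Type*} [AddCommGroup A] [AddCommGroup B]
    (φ : A →+ B) (ψ : B →+ A) (hcomp : ∀ a : A, ψ (φ a) = 2 • a)
    (h1 : Finite (B ⧸ φ.range)) (h2 : Finite (A ⧸ ψ.range)) (h3 : Finite ψ.ker) :
    Finite (A ⧸ (2 • AddMonoidHom.id A).range) ∧
      Nat.card (A ⧸ (2 • AddMonoidHom.id A).range) * Nat.card ψ.ker =
        Nat.card (B ⧸ φ.range) * Nat.card (A ⧸ ψ.range) *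
          Nat.card (AddSubgroup.map φ (2 • AddMonoidHom.id A).ker) := by
  have comp_eq : ψ.comp φ = 2 • AddMonoidHom.id A := AddMonoidHom.ext hcomp
  rw [← comp_eq, ← card_mul_relIndex (map_ker_comp_le φ ψ)]
  exact (stmt4_general φ ψ h1 h2).imp_right fun card_eq ↦ by rw [← card_eq]; ring
end

section
/- Let D be a nonzero fourth-power-free integer and let E_D be the elliptic curve over ℚ with Weierstrass equation y² = x³ + D·x. Let ν(2D) denote the number of distinct prime divisors of 2D. Then the quotient group E_D(ℚ)/2E_D(ℚ) is finite and its order is at most 2^(2·ν(2D) + 1). (Equivalently, the rank of E_D(ℚ) is strictly less than 2·ν(2D).) -/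
/-- The subgroup `2·G` of an abelian group `G`, the image of multiplication by `2`. -/
def twoSub (G : Type*) [AddCommGroup G] : AddSubgroup G := (2 • AddMonoidHom.id G).range

/-!
Multiplication by two on `y² = x³ + a x² + b x` factors through a `2`-isogeny to
`y² = x³ - 2a x² + (a² - 4b) x` and its dual. A point of either curve lies in the image of the
isogeny into that curve as soon as its abscissa (read as `b` at `(0, 0)`) is a square. The class of
the abscissa modulo squares is additive, since the abscissae of three points on a line
`y = ℓ x + c` multiply to `c²`, and over `ℚ` it has even valuation at every prime not dividing `b`.
So it is determined by its sign and by its valuations modulo two at the primes dividing `b`, which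
bounds the index of the image by `2 ^ (ν(b) + 1)`. On one of the two curves all abscissae are
positive, and there the sign contributes nothing.
-/

open WeierstrassCurve.Affine Polynomial

namespace TwoDescent

section Line

variable {F : Type*} [Field F] {W : WeierstrassCurve.Affine F}

/-- The line `y = ℓ x + c` meets the Weierstrass curve `W` in three points with abscissae
`x₁`, `x₂`, `x₃`, counted with multiplicity. -/
def IsLineSection (W : WeierstrassCurve.Affine F) (ℓ c x₁ x₂ x₃ : F) : Prop :=
  W.addPolynomial 0 c ℓ = -((X - C x₁) * (X - C x₂) * (X - C x₃))

lemma isLineSection_iff {ℓ c x₁ x₂ x₃ : F} :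
    IsLineSection W ℓ c x₁ x₂ x₃ ↔ x₁ + x₂ + x₃ = ℓ ^ 2 + W.a₁ * ℓ - W.a₂ ∧
      x₁ * x₂ + x₁ * x₃ + x₂ * x₃ = W.a₄ - W.a₁ * c - (2 * c + W.a₃) * ℓ ∧
      x₁ * x₂ * x₃ = c ^ 2 + W.a₃ * c - W.a₆ := by
  rw [IsLineSection, addPolynomial_eq, neg_inj, Cubic.prod_X_sub_C_eq, Cubic.toPoly_injective,
    Cubic.mk.injEq]
  constructor
  · rintro ⟨-, h₁, h₂, h₃⟩
    exact ⟨by linear_combination h₁, by linear_combination -h₂, by linear_combination h₃⟩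
  · rintro ⟨h₁, h₂, h₃⟩
    exact ⟨rfl, by linear_combination h₁, by linear_combination -h₂, by linear_combination h₃⟩

lemma IsLineSection.rotate {ℓ c x₁ x₂ x₃ : F} (h : IsLineSection W ℓ c x₁ x₂ x₃) :
    IsLineSection W ℓ c x₂ x₃ x₁ := by
  rw [IsLineSection, h]
  ring

lemma IsLineSection.equation {ℓ c x₁ x₂ x₃ : F} (h : IsLineSection W ℓ c x₁ x₂ x₃) :
    W.Equation x₁ (ℓ * x₁ + c) := by
  obtain ⟨hsum, hprod, hnorm⟩ := isLineSection_iff.1 h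
  rw [equation_iff]
  linear_combination -x₁ ^ 2 * hsum + x₁ * hprod - hnorm

lemma addPolynomial_eq_addPolynomial_zero (x y ℓ : F) :
    W.addPolynomial x y ℓ = W.addPolynomial 0 (y - ℓ * x) ℓ := by
  have : linePolynomial x y ℓ = linePolynomial 0 (y - ℓ * x) ℓ := by
    simp only [linePolynomial, C_sub, C_mul, C_0]
    ring
  rw [addPolynomial, addPolynomial, this]

lemma IsLineSection.tangent_eq {ℓ c x x' : F} (h : IsLineSection W ℓ c x x x') :
    ℓ * (2 * (ℓ * x + c) + W.a₁ * x + W.a₃) =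
      3 * x ^ 2 + 2 * W.a₂ * x + W.a₄ - W.a₁ * (ℓ * x + c) := by
  obtain ⟨hsum, hprod, -⟩ := isLineSection_iff.1 h
  linear_combination -2 * x * hsum + hprod

lemma IsLineSection.tangent_ne_negY {ℓ c x x' : F} (h : IsLineSection W ℓ c x x x')
    (hxy : W.Nonsingular x (ℓ * x + c)) : ℓ * x + c ≠ W.negY x (ℓ * x + c) := by
  intro hy
  have dY_eq_zero : 2 * (ℓ * x + c) + W.a₁ * x + W.a₃ = 0 := by
    rw [negY] at hy
    linear_combination hy
  have dX_eq_zero : W.a₁ * (ℓ * x + c) - (3 * x ^ 2 + 2 * W.a₂ * x + W.a₄) = 0 := by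
    linear_combination h.tangent_eq - ℓ * dY_eq_zero
  rcases ((W.nonsingular_iff' _ _).1 hxy).2 with dX_ne_zero | dY_ne_zero
  · exact dX_ne_zero dX_eq_zero
  · exact dY_ne_zero dY_eq_zero

lemma IsLineSection.ne_negY {ℓ c x₁ x₂ x₃ : F} (h : IsLineSection W ℓ c x₁ x₂ x₃)
    (h₁ : W.Nonsingular x₁ (ℓ * x₁ + c)) :
    ¬(x₁ = x₂ ∧ ℓ * x₁ + c = W.negY x₂ (ℓ * x₂ + c)) := by
  rintro ⟨rfl, hy⟩
  exact h.tangent_ne_negY h₁ hy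

variable [DecidableEq F]

lemma IsLineSection.slope_eq {ℓ c x₁ x₂ x₃ : F} (h : IsLineSection W ℓ c x₁ x₂ x₃)
    (h₁ : W.Nonsingular x₁ (ℓ * x₁ + c)) :
    W.slope x₁ x₂ (ℓ * x₁ + c) (ℓ * x₂ + c) = ℓ := by
  rcases eq_or_ne x₁ x₂ with rfl | hx
  · have hy := h.tangent_ne_negY h₁
    rw [slope_of_Y_ne rfl hy, div_eq_iff (sub_ne_zero.2 hy), negY]
    linear_combination -h.tangent_eq
  · rw [slope_of_X_ne hx, div_eq_iff (sub_ne_zero.2 hx)]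
    ring

theorem IsLineSection.add_add_eq_zero {ℓ c x₁ x₂ x₃ y₁ y₂ y₃ : F}
    (h : IsLineSection W ℓ c x₁ x₂ x₃)
    (hy₁ : y₁ = ℓ * x₁ + c) (hy₂ : y₂ = ℓ * x₂ + c) (hy₃ : y₃ = ℓ * x₃ + c)
    (h₁ : W.Nonsingular x₁ y₁) (h₂ : W.Nonsingular x₂ y₂) (h₃ : W.Nonsingular x₃ y₃) :
    Point.some x₁ y₁ h₁ + Point.some x₂ y₂ h₂ + Point.some x₃ y₃ h₃ = 0 := by
  subst hy₁ hy₂ hy₃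
  have hslope := h.slope_eq h₁
  have hX : W.addX x₁ x₂ ℓ = x₃ := by
    rw [addX]
    linear_combination -(isLineSection_iff.1 h).1
  rw [Point.add_some (h.ne_negY h₁), ← eq_neg_iff_add_eq_zero, Point.neg_some, Point.some.injEq]
  refine ⟨by rw [hslope, hX], ?_⟩
  rw [hslope, addY, negAddY, hX]
  congr 1
  ring

theorem exists_isLineSection {x₁ x₂ y₁ y₂ : F} (h₁ : W.Nonsingular x₁ y₁)
    (h₂ : W.Nonsingular x₂ y₂) (hne : ¬(x₁ = x₂ ∧ y₁ = W.negY x₂ y₂)) :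
    ∃ ℓ c x₃, ∃ h₃ : W.Nonsingular x₃ (ℓ * x₃ + c), IsLineSection W ℓ c x₁ x₂ x₃ ∧
      y₁ = ℓ * x₁ + c ∧ y₂ = ℓ * x₂ + c ∧
      Point.some x₁ y₁ h₁ + Point.some x₂ y₂ h₂ = -Point.some x₃ (ℓ * x₃ + c) h₃ := by
  set ℓ := W.slope x₁ x₂ y₁ y₂ with hℓ
  have hy₃ : ℓ * W.addX x₁ x₂ ℓ + (y₁ - ℓ * x₁) = W.negAddY x₁ x₂ y₁ ℓ := by
    rw [negAddY]
    ring
  have h₃ : W.Nonsingular (W.addX x₁ x₂ ℓ) (ℓ * W.addX x₁ x₂ ℓ + (y₁ - ℓ * x₁)) :=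
    hy₃ ▸ nonsingular_negAdd h₁ h₂ hne
  refine ⟨ℓ, y₁ - ℓ * x₁, W.addX x₁ x₂ ℓ, h₃, ?_, by ring, ?_, ?_⟩
  · rw [IsLineSection, ← addPolynomial_eq_addPolynomial_zero]
    exact addPolynomial_slope h₁.1 h₂.1 hne
  · rcases eq_or_ne x₁ x₂ with rfl | hx
    · have := Y_eq_of_Y_ne h₁.1 h₂.1 rfl fun hy ↦ hne ⟨rfl, hy⟩
      linear_combination -this
    · rw [hℓ, slope_of_X_ne hx]
      have := sub_ne_zero.2 hx
      field_simp
      ring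
  · rw [Point.add_some hne, Point.neg_some, Point.some.injEq, addY, ← hℓ, hy₃]
    exact ⟨rfl, rfl⟩

/-- A function on the points of a Weierstrass curve, compatible with zero and negation, whose
values at any three collinear points sum to zero, as a homomorphism. -/
def homOfLineSections {A : Type*} [AddCommGroup A] (f : W.Point → A) (map_zero : f 0 = 0)
    (map_neg : ∀ P, f (-P) = -f P)
    (map_line : ∀ {ℓ c x₁ x₂ x₃ : F}, IsLineSection W ℓ c x₁ x₂ x₃ → ∀ h₁ h₂ h₃,
      f (.some x₁ (ℓ * x₁ + c) h₁) + f (.some x₂ (ℓ * x₂ + c) h₂) +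
        f (.some x₃ (ℓ * x₃ + c) h₃) = 0) : W.Point →+ A where
  toFun := f
  map_zero' := map_zero
  map_add' := by
    rintro (_ | ⟨x₁, y₁, h₁⟩) (_ | ⟨x₂, y₂, h₂⟩)
    · rw [← Point.zero_def, zero_add, map_zero, zero_add]
    · rw [← Point.zero_def, zero_add, map_zero, zero_add]
    · rw [← Point.zero_def, add_zero, map_zero, add_zero]
    by_cases hne : x₁ = x₂ ∧ y₁ = W.negY x₂ y₂
    · obtain ⟨rfl, rfl⟩ := hne
      rw [← Point.neg_some h₂, map_neg, neg_add_cancel, neg_add_cancel, map_zero]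
    · obtain ⟨ℓ, c, x₃, h₃, hline, rfl, rfl, hsum⟩ := exists_isLineSection h₁ h₂ hne
      rw [hsum, map_neg, neg_eq_iff_add_eq_zero, add_comm]
      exact map_line hline h₁ h₂ h₃

end Line

section TwoTorsionCurve

variable {F : Type*} [Field F] {a b a' b' l : F}

/-- The curve `y² = x³ + a x² + b x`, the normal form of a Weierstrass curve with a marked rational
point `(0, 0)` of order two. -/
def twoTorsionCurve (a b : F) : WeierstrassCurve.Affine F := ⟨0, a, 0, b, 0⟩

@[simp]
lemma negY_twoTorsionCurve (x y : F) : (twoTorsionCurve a b).negY x y = -y := by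
  simp [twoTorsionCurve, negY]

lemma equation_twoTorsionCurve_iff {x y : F} :
    (twoTorsionCurve a b).Equation x y ↔ y ^ 2 = x ^ 3 + a * x ^ 2 + b * x := by
  simp [equation_iff, twoTorsionCurve]

lemma nonsingular_twoTorsionCurve (h2 : (2 : F) ≠ 0) (hb : b ≠ 0) (hab : a ^ 2 - 4 * b ≠ 0)
    {x y : F} (h : y ^ 2 = x ^ 3 + a * x ^ 2 + b * x) : (twoTorsionCurve a b).Nonsingular x y := by
  have hΔ : (twoTorsionCurve a b).Δ = 2 ^ 4 * b ^ 2 * (a ^ 2 - 4 * b) := by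
    simp only [twoTorsionCurve, WeierstrassCurve.Δ, WeierstrassCurve.b₂, WeierstrassCurve.b₄,
      WeierstrassCurve.b₆, WeierstrassCurve.b₈]
    ring
  refine (equation_iff_nonsingular_of_Δ_ne_zero ?_).1 (equation_twoTorsionCurve_iff.2 h)
  rw [hΔ]
  exact mul_ne_zero (mul_ne_zero (pow_ne_zero 4 h2) (pow_ne_zero 2 hb)) hab

lemma isLineSection_twoTorsionCurve_iff {ℓ c x₁ x₂ x₃ : F} :
    IsLineSection (twoTorsionCurve a b) ℓ c x₁ x₂ x₃ ↔ x₁ + x₂ + x₃ = ℓ ^ 2 - a ∧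
      x₁ * x₂ + x₁ * x₃ + x₂ * x₃ = b - 2 * ℓ * c ∧ x₁ * x₂ * x₃ = c ^ 2 := by
  simp only [isLineSection_iff, twoTorsionCurve, zero_mul, add_zero, sub_zero]
  rw [show b - 2 * c * ℓ = b - 2 * ℓ * c by ring]

lemma tangent_isLineSection (h2 : (2 : F) ≠ 0) {x y : F} (hy : y ≠ 0)
    (hxy : y ^ 2 = x ^ 3 + a * x ^ 2 + b * x) :
    IsLineSection (twoTorsionCurve a b) ((3 * x ^ 2 + 2 * a * x + b) / (2 * y))
      ((b * x - x ^ 3) / (2 * y)) x x (((b - x ^ 2) / (2 * y)) ^ 2) := by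
  rw [isLineSection_twoTorsionCurve_iff]
  refine ⟨?_, ?_, ?_⟩
  · field_simp
    rw [hxy]
    ring
  · field_simp
    rw [hxy]
    ring
  · field_simp

lemma IsLineSection.of_zero {ℓ c x₂ x₃ : F}
    (h : IsLineSection (twoTorsionCurve a b) ℓ c 0 x₂ x₃) : c = 0 ∧ x₂ * x₃ = b := by
  obtain ⟨-, hprod, hc⟩ := isLineSection_twoTorsionCurve_iff.1 h
  have hc : c = 0 := by simpa using hc.symm
  refine ⟨hc, ?_⟩
  rw [hc] at hprod
  linear_combination hprod

/-- The curves `y² = x³ + a x² + b x` and `y² = x³ + a' x² + b' x` are smooth and the second is the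
quotient of the first by `(0, 0)`, scaled by `l`. Allowing the scaling `l` makes the relation
symmetric: the dual isogeny has the scaling `1 / (2 l)`. -/
structure TwoIsogenous (a b a' b' l : F) : Prop where
  two_ne_zero : (2 : F) ≠ 0
  scale_ne_zero : l ≠ 0
  b_ne_zero : b ≠ 0
  b'_ne_zero : b' ≠ 0
  a'_eq : a' = -2 * a * l ^ 2
  b'_eq : b' = (a ^ 2 - 4 * b) * l ^ 4

namespace TwoIsogenous

lemma dual (h : TwoIsogenous a b a' b' l) : TwoIsogenous a' b' a b (1 / (2 * l)) := by
  have h2 := h.two_ne_zero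
  have hl := h.scale_ne_zero
  refine ⟨h2, one_div_ne_zero (mul_ne_zero h2 hl), h.b'_ne_zero, h.b_ne_zero, ?_, ?_⟩
  · rw [h.a'_eq]
    field_simp
  · rw [h.a'_eq, h.b'_eq]
    field_simp
    ring

lemma nonsingular (h : TwoIsogenous a b a' b' l) {x y : F}
    (hxy : y ^ 2 = x ^ 3 + a * x ^ 2 + b * x) : (twoTorsionCurve a b).Nonsingular x y := by
  refine nonsingular_twoTorsionCurve h.two_ne_zero h.b_ne_zero (fun hab ↦ h.b'_ne_zero ?_) hxy
  rw [h.b'_eq, hab, zero_mul]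

lemma image_equation (h : TwoIsogenous a b a' b' l) {x y : F} (hx : x ≠ 0)
    (hxy : y ^ 2 = x ^ 3 + a * x ^ 2 + b * x) :
    (l ^ 3 * (y * (b - x ^ 2) / x ^ 2)) ^ 2 =
      (l ^ 2 * (x + a + b / x)) ^ 3 + a' * (l ^ 2 * (x + a + b / x)) ^ 2 +
        b' * (l ^ 2 * (x + a + b / x)) := by
  have hv : (l ^ 3 * (y * (b - x ^ 2) / x ^ 2)) ^ 2 =
      l ^ 6 * ((x ^ 3 + a * x ^ 2 + b * x) * (b - x ^ 2) ^ 2 / x ^ 4) := by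
    rw [← hxy]
    field_simp
  rw [hv, h.a'_eq, h.b'_eq]
  field_simp
  ring

end TwoIsogenous

/-- At most one of three collinear points is `(0, 0)`, and by symmetry it can be taken first. -/
lemma sum_eq_zero_of_isLineSection {A : Type*} [AddCommGroup A]
    (f : (twoTorsionCurve a b).Point → A)
    (map_line_zero : ∀ {ℓ x₂ x₃ : F}, x₂ * x₃ = b → ∀ h₁ h₂ h₃,
      f (.some 0 0 h₁) + f (.some x₂ (ℓ * x₂) h₂) + f (.some x₃ (ℓ * x₃) h₃) = 0)
    (map_line : ∀ {ℓ c x₁ x₂ x₃ : F}, IsLineSection (twoTorsionCurve a b) ℓ c x₁ x₂ x₃ →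
      x₁ ≠ 0 → x₂ ≠ 0 → x₃ ≠ 0 → ∀ h₁ h₂ h₃,
        f (.some x₁ (ℓ * x₁ + c) h₁) + f (.some x₂ (ℓ * x₂ + c) h₂) +
          f (.some x₃ (ℓ * x₃ + c) h₃) = 0)
    {ℓ c x₁ x₂ x₃ : F} (h : IsLineSection (twoTorsionCurve a b) ℓ c x₁ x₂ x₃) (h₁ h₂ h₃) :
    f (.some x₁ (ℓ * x₁ + c) h₁) + f (.some x₂ (ℓ * x₂ + c) h₂) +
      f (.some x₃ (ℓ * x₃ + c) h₃) = 0 := by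
  have of_zero : ∀ {x₂ x₃ : F}, IsLineSection (twoTorsionCurve a b) ℓ c 0 x₂ x₃ → ∀ h₁ h₂ h₃,
      f (.some 0 (ℓ * 0 + c) h₁) + f (.some x₂ (ℓ * x₂ + c) h₂) +
        f (.some x₃ (ℓ * x₃ + c) h₃) = 0 := by
    intro x₂ x₃ h h₁ h₂ h₃
    obtain ⟨rfl, hb⟩ := h.of_zero
    simp only [mul_zero, add_zero] at h₁ h₂ h₃ ⊢
    exact map_line_zero hb h₁ h₂ h₃
  by_cases hx₁ : x₁ = 0
  · subst hx₁
    exact of_zero h h₁ h₂ h₃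
  by_cases hx₂ : x₂ = 0
  · subst hx₂
    rw [← of_zero h.rotate h₂ h₃ h₁]
    abel
  by_cases hx₃ : x₃ = 0
  · subst hx₃
    rw [← of_zero h.rotate.rotate h₃ h₁ h₂]
    abel
  exact map_line h hx₁ hx₂ hx₃ h₁ h₂ h₃

lemma IsLineSection.intercept_ne_zero {ℓ c x₁ x₂ x₃ : F}
    (h : IsLineSection (twoTorsionCurve a b) ℓ c x₁ x₂ x₃) (h₁ : x₁ ≠ 0) (h₂ : x₂ ≠ 0)
    (h₃ : x₃ ≠ 0) : c ≠ 0 := by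
  rintro rfl
  have := (isLineSection_twoTorsionCurve_iff.1 h).2.2
  simp [h₁, h₂, h₃] at this

namespace TwoIsogenous

lemma image_mem_line (ℓ : F) {c x y : F} (hc : c ≠ 0) (hx : x ≠ 0)
    (hxy : y ^ 2 = x ^ 3 + a * x ^ 2 + b * x) (hy : y = ℓ * x + c) :
    l ^ 3 * (y * (b - x ^ 2) / x ^ 2) =
      l * ((b - ℓ * c) / c) * (l ^ 2 * (x + a + b / x)) +
        l ^ 3 * (a * ℓ - c - ℓ ^ 2 * b / c) := by
  subst hy
  field_simp
  linear_combination (l ^ 3 * b) * hxy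

lemma image_isLineSection (h : TwoIsogenous a b a' b' l) {ℓ c x₁ x₂ x₃ : F}
    (hline : IsLineSection (twoTorsionCurve a b) ℓ c x₁ x₂ x₃) (h₁ : x₁ ≠ 0) (h₂ : x₂ ≠ 0)
    (h₃ : x₃ ≠ 0) :
    IsLineSection (twoTorsionCurve a' b') (l * ((b - ℓ * c) / c))
      (l ^ 3 * (a * ℓ - c - ℓ ^ 2 * b / c))
      (l ^ 2 * (x₁ + a + b / x₁)) (l ^ 2 * (x₂ + a + b / x₂)) (l ^ 2 * (x₃ + a + b / x₃)) := by
  have hc := hline.intercept_ne_zero h₁ h₂ h₃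
  obtain ⟨hsum, hprod, hnorm⟩ := isLineSection_twoTorsionCurve_iff.1 hline
  obtain rfl : x₁ = c ^ 2 / (x₂ * x₃) := by
    rw [eq_div_iff (mul_ne_zero h₂ h₃), ← hnorm]
    ring
  obtain rfl : a = ℓ ^ 2 - (c ^ 2 / (x₂ * x₃) + x₂ + x₃) := by linear_combination hsum
  obtain rfl : b = c ^ 2 / (x₂ * x₃) * x₂ + c ^ 2 / (x₂ * x₃) * x₃ + x₂ * x₃ + 2 * ℓ * c := by
    linear_combination -hprod
  rw [isLineSection_twoTorsionCurve_iff, h.a'_eq, h.b'_eq]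
  refine ⟨?_, ?_, ?_⟩ <;>
  · field_simp
    ring

variable [DecidableEq F]

/-- The map on points underlying `TwoIsogenous.isogeny`. -/
def isogenyFun (h : TwoIsogenous a b a' b' l) :
    (twoTorsionCurve a b).Point → (twoTorsionCurve a' b').Point
  | .zero => 0
  | .some x y hxy =>
    if hx : x = 0 then 0
    else .some (l ^ 2 * (x + a + b / x)) (l ^ 3 * (y * (b - x ^ 2) / x ^ 2)) <|
      h.dual.nonsingular (h.image_equation hx (equation_twoTorsionCurve_iff.1 hxy.1))

lemma isogenyFun_some_zero (h : TwoIsogenous a b a' b' l) {y : F}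
    (hy : (twoTorsionCurve a b).Nonsingular 0 y) : h.isogenyFun (.some 0 y hy) = 0 := by
  simp [isogenyFun]

lemma isogenyFun_some (h : TwoIsogenous a b a' b' l) {x y : F} (hx : x ≠ 0)
    (hxy : (twoTorsionCurve a b).Nonsingular x y) :
    h.isogenyFun (.some x y hxy) =
      .some (l ^ 2 * (x + a + b / x)) (l ^ 3 * (y * (b - x ^ 2) / x ^ 2))
        (h.dual.nonsingular (h.image_equation hx (equation_twoTorsionCurve_iff.1 hxy.1))) := by
  simp [isogenyFun, hx]

lemma isogenyFun_neg (h : TwoIsogenous a b a' b' l) (P : (twoTorsionCurve a b).Point) :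
    h.isogenyFun (-P) = -h.isogenyFun P := by
  rcases P with _ | ⟨x, y, hxy⟩
  · rfl
  rw [Point.neg_some]
  by_cases hx : x = 0
  · subst hx
    rw [isogenyFun_some_zero, isogenyFun_some_zero, neg_zero]
  · rw [isogenyFun_some h hx, isogenyFun_some h hx, Point.neg_some, Point.some.injEq,
      negY_twoTorsionCurve, negY_twoTorsionCurve]
    exact ⟨rfl, by ring⟩

/-- The isogeny `(x, y) ↦ (l² (x + a + b / x), l³ y (b - x²) / x²)` of degree two with kernel
generated by `(0, 0)`. -/
def isogeny (h : TwoIsogenous a b a' b' l) :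
    (twoTorsionCurve a b).Point →+ (twoTorsionCurve a' b').Point :=
  homOfLineSections h.isogenyFun rfl h.isogenyFun_neg <| sum_eq_zero_of_isLineSection _
    (fun {ℓ x₂ x₃} hb h₁ h₂ h₃ ↦ by
      have hx₂ : x₂ ≠ 0 := left_ne_zero_of_mul (hb ▸ h.b_ne_zero)
      have hx₃ : x₃ ≠ 0 := right_ne_zero_of_mul (hb ▸ h.b_ne_zero)
      rw [isogenyFun_some_zero, isogenyFun_some h hx₂, isogenyFun_some h hx₃, zero_add,
        ← eq_neg_iff_add_eq_zero, Point.neg_some, Point.some.injEq, negY_twoTorsionCurve, ← hb]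
      constructor <;>
      · field_simp
        ring)
    (fun {ℓ c x₁ x₂ x₃} hline hx₁ hx₂ hx₃ h₁ h₂ h₃ ↦ by
      have hc := hline.intercept_ne_zero hx₁ hx₂ hx₃
      rw [isogenyFun_some h hx₁, isogenyFun_some h hx₂, isogenyFun_some h hx₃]
      refine (h.image_isLineSection hline hx₁ hx₂ hx₃).add_add_eq_zero ?_ ?_ ?_ _ _ _ <;>
      exact image_mem_line ℓ hc ‹_› (equation_twoTorsionCurve_iff.1 (And.left ‹_›)) rfl)

lemma isogeny_some_zero (h : TwoIsogenous a b a' b' l) {y : F}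
    (hy : (twoTorsionCurve a b).Nonsingular 0 y) : h.isogeny (.some 0 y hy) = 0 :=
  h.isogenyFun_some_zero hy

lemma isogeny_some (h : TwoIsogenous a b a' b' l) {x y : F} (hx : x ≠ 0)
    (hxy : (twoTorsionCurve a b).Nonsingular x y) :
    h.isogeny (.some x y hxy) =
      .some (l ^ 2 * (x + a + b / x)) (l ^ 3 * (y * (b - x ^ 2) / x ^ 2))
        (h.dual.nonsingular (h.image_equation hx (equation_twoTorsionCurve_iff.1 hxy.1))) :=
  h.isogenyFun_some hx hxy

lemma isogeny_dual_isogeny_some (h : TwoIsogenous a b a' b' l) {x y : F} (hx : x ≠ 0) (hy : y ≠ 0)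
    (hxy : (twoTorsionCurve a b).Nonsingular x y) :
    h.dual.isogeny (h.isogeny (.some x y hxy)) = 2 • Point.some x y hxy := by
  have h2 := h.two_ne_zero
  have hl := h.scale_ne_zero
  have heq := equation_twoTorsionCurve_iff.1 hxy.1
  have htangent := tangent_isLineSection h2 hy heq
  set ℓ := (3 * x ^ 2 + 2 * a * x + b) / (2 * y) with hℓ
  set c := (b * x - x ^ 3) / (2 * y) with hc
  set u := ((b - x ^ 2) / (2 * y)) ^ 2 with hu
  have hyx : y = ℓ * x + c := by
    rw [hℓ, hc]
    field_simp
    linear_combination 2 * heq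
  have hX : l ^ 2 * (x + a + b / x) = (l * y / x) ^ 2 := by
    field_simp
    linear_combination -heq
  have hX_ne : l ^ 2 * (x + a + b / x) ≠ 0 := hX ▸ pow_ne_zero 2 (by simp [hl, hx, hy])
  have hU : (1 / (2 * l)) ^ 2 * (l ^ 2 * (x + a + b / x) + a' + b' / (l ^ 2 * (x + a + b / x))) =
      u := by
    rw [h.a'_eq, h.b'_eq, hu, hX]
    field_simp
    linear_combination (y ^ 2 + x * (x ^ 2 + a * x + b) - 2 * a * x ^ 2) * heq
  have hV : (1 / (2 * l)) ^ 3 * (l ^ 3 * (y * (b - x ^ 2) / x ^ 2) *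
      (b' - (l ^ 2 * (x + a + b / x)) ^ 2) / (l ^ 2 * (x + a + b / x)) ^ 2) = -(ℓ * u + c) := by
    rw [h.b'_eq, hX, hℓ, hu, hc]
    field_simp
    linear_combination
      (x ^ 2 - b) * (y ^ 2 + x * (x ^ 2 + a * x + b) - 4 * x ^ 3) * heq
  have hu_mem : (twoTorsionCurve a b).Nonsingular u (ℓ * u + c) :=
    h.nonsingular (equation_twoTorsionCurve_iff.1 htangent.rotate.rotate.equation)
  have hsum := htangent.add_add_eq_zero hyx hyx rfl hxy hxy hu_mem
  rw [isogeny_some h hx, isogeny_some h.dual hX_ne, two_nsmul, eq_neg_of_add_eq_zero_left hsum,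
    Point.neg_some, Point.some.injEq, negY_twoTorsionCurve]
  exact ⟨hU, hV⟩

theorem isogeny_dual_isogeny (h : TwoIsogenous a b a' b' l) (P : (twoTorsionCurve a b).Point) :
    h.dual.isogeny (h.isogeny P) = 2 • P := by
  rcases P with _ | ⟨x, y, hxy⟩
  · rw [← Point.zero_def, map_zero, map_zero, nsmul_zero]
  have heq := equation_twoTorsionCurve_iff.1 hxy.1
  by_cases hy : y = 0
  · subst hy
    have two_nsmul_eq_zero : 2 • Point.some x 0 hxy = 0 := by
      rw [two_nsmul, Point.add_self_of_Y_eq (by rw [negY_twoTorsionCurve, neg_zero])]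
    rw [two_nsmul_eq_zero]
    by_cases hx : x = 0
    · subst hx
      rw [isogeny_some_zero, map_zero]
    · have hX : l ^ 2 * (x + a + b / x) = 0 := by
        field_simp
        apply mul_left_cancel₀ hx
        linear_combination (-l ^ 2) * heq
      simp only [isogeny_some h hx, hX, isogeny_some_zero]
  · have hx : x ≠ 0 := by
      rintro rfl
      simp [hy] at heq
    exact h.isogeny_dual_isogeny_some hx hy hxy

end TwoIsogenous

end TwoTorsionCurve

section Descent

variable {F : Type*} [Field F] {a b a' b' l : F}

open scoped Classical in
/-- The abscissa of a point of `y² = x³ + a x² + b x`, taken to be `1` at infinity and `b` at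
`(0, 0)`. Its class modulo squares is the descent homomorphism. -/
noncomputable def descentUnit (hb : b ≠ 0) : (twoTorsionCurve a b).Point → Fˣ
  | .zero => 1
  | .some x _ _ => if hx : x = 0 then Units.mk0 b hb else Units.mk0 x hx

lemma descentUnit_zero (hb : b ≠ 0) : descentUnit hb (0 : (twoTorsionCurve a b).Point) = 1 :=
  rfl

lemma descentUnit_some_zero (hb : b ≠ 0) {y : F} (hy : (twoTorsionCurve a b).Nonsingular 0 y) :
    descentUnit hb (.some 0 y hy) = Units.mk0 b hb := by
  simp [descentUnit]

lemma descentUnit_some (hb : b ≠ 0) {x y : F} (hx : x ≠ 0)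
    (hxy : (twoTorsionCurve a b).Nonsingular x y) :
    descentUnit hb (.some x y hxy) = Units.mk0 x hx := by
  simp [descentUnit, hx]

lemma descentUnit_neg (hb : b ≠ 0) (P : (twoTorsionCurve a b).Point) :
    descentUnit hb (-P) = descentUnit hb P := by
  rcases P with _ | ⟨x, y, hxy⟩ <;> rfl

lemma map_ofMul_eq_zero_of_isSquare {G A : Type*} [CommGroup G] [AddCommGroup A]
    (χ : Additive G →+ A) (hA : ∀ t : A, t + t = 0) {u : G} (hu : IsSquare u) :
    χ (.ofMul u) = 0 := by
  obtain ⟨v, rfl⟩ := hu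
  rw [ofMul_mul, map_add, hA]

variable [DecidableEq F] {A : Type*} [AddCommGroup A]

/-- The image of the abscissa under a character `χ` of `Fˣ` that is trivial on squares, as a
homomorphism on the points of `y² = x³ + a x² + b x`. -/
noncomputable def descentHom (hb : b ≠ 0) (χ : Additive Fˣ →+ A) (hA : ∀ t : A, t + t = 0) :
    (twoTorsionCurve a b).Point →+ A :=
  homOfLineSections (fun P ↦ χ (.ofMul (descentUnit hb P)))
    (by rw [descentUnit_zero, ofMul_one, map_zero])
    (fun P ↦ by rw [descentUnit_neg, eq_neg_iff_add_eq_zero, hA]) <|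
    sum_eq_zero_of_isLineSection (fun P ↦ χ (.ofMul (descentUnit hb P)))
      (fun {ℓ x₂ x₃} hx h₁ h₂ h₃ ↦ by
        have hx₂ : x₂ ≠ 0 := left_ne_zero_of_mul (hx ▸ hb)
        have hx₃ : x₃ ≠ 0 := right_ne_zero_of_mul (hx ▸ hb)
        rw [descentUnit_some_zero, descentUnit_some hb hx₂, descentUnit_some hb hx₃, ← map_add,
          ← map_add, ← ofMul_mul, ← ofMul_mul]
        refine map_ofMul_eq_zero_of_isSquare χ hA ⟨Units.mk0 b hb, Units.ext ?_⟩
        simp [mul_assoc, hx])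
      (fun {ℓ c x₁ x₂ x₃} hline hx₁ hx₂ hx₃ h₁ h₂ h₃ ↦ by
        have hc := hline.intercept_ne_zero hx₁ hx₂ hx₃
        rw [descentUnit_some hb hx₁, descentUnit_some hb hx₂, descentUnit_some hb hx₃, ← map_add,
          ← map_add, ← ofMul_mul, ← ofMul_mul]
        refine map_ofMul_eq_zero_of_isSquare χ hA ⟨Units.mk0 c hc, Units.ext ?_⟩
        simpa [sq] using (isLineSection_twoTorsionCurve_iff.1 hline).2.2)

lemma index_dvd_card_of_ker_le {G : Type*} [AddGroup G] (f : G →+ A) {H : AddSubgroup G}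
    (hf : f.ker ≤ H) : H.index ∣ Nat.card A :=
  (AddSubgroup.index_dvd_of_le hf).trans <| by
    rw [AddSubgroup.index_ker]
    exact AddSubgroup.card_addSubgroup_dvd_card _

namespace TwoIsogenous

lemma some_mem_range_isogeny (h : TwoIsogenous a b a' b' l) {s t x y : F}
    (ht : t ^ 2 = (s ^ 2 - a * l ^ 2) ^ 2 - 4 * b * l ^ 4) (hx : x = s ^ 2) (hy : y = s * t)
    (hxy : (twoTorsionCurve a' b').Nonsingular x y) : Point.some x y hxy ∈ h.isogeny.range := by
  subst hx hy
  have h2 := h.two_ne_zero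
  have hl := h.scale_ne_zero
  set z := (s ^ 2 - a * l ^ 2 - t) / (2 * l ^ 2) with hz
  have hquad : z ^ 2 + a * z + b = (s / l) ^ 2 * z := by
    rw [hz]
    field_simp
    linear_combination ht
  have hz_ne : z ≠ 0 := by
    intro hz
    exact h.b_ne_zero (by simpa [hz] using hquad)
  have ht_eq : t = s ^ 2 - a * l ^ 2 - 2 * l ^ 2 * z := by
    rw [hz]
    field_simp
    ring
  have hb : b = (s / l) ^ 2 * z - z ^ 2 - a * z := by linear_combination hquad
  have hcurve : (z * s / l) ^ 2 = z ^ 3 + a * z ^ 2 + b * z := by linear_combination (-z) * hquad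
  refine ⟨.some z (z * s / l) (h.nonsingular hcurve), ?_⟩
  rw [isogeny_some h hz_ne, Point.some.injEq, ht_eq, hb]
  constructor <;>
  · field_simp
    ring

theorem mem_range_isogeny_of_isSquare (h : TwoIsogenous a b a' b' l)
    {P : (twoTorsionCurve a' b').Point} (hP : IsSquare (descentUnit h.b'_ne_zero P : F)) :
    P ∈ h.isogeny.range := by
  rcases P with _ | ⟨x, y, hxy⟩
  · exact zero_mem _
  have heq := equation_twoTorsionCurve_iff.1 hxy.1
  by_cases hx : x = 0
  · subst hx
    obtain ⟨t, ht⟩ := hP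
    rw [descentUnit_some_zero, Units.val_mk0, h.b'_eq] at ht
    refine h.some_mem_range_isogeny (s := 0) (t := t) ?_ (by ring) (by simpa using heq) hxy
    linear_combination -ht
  · obtain ⟨s, hs⟩ := hP
    rw [descentUnit_some _ hx, Units.val_mk0] at hs
    subst hs
    have hs : s ≠ 0 := left_ne_zero_of_mul hx
    refine h.some_mem_range_isogeny (s := s) (t := y / s) ?_ (by ring) (by field_simp) hxy
    rw [h.a'_eq, h.b'_eq] at heq
    field_simp
    linear_combination heq

theorem index_range_isogeny_dvd_card (h : TwoIsogenous a b a' b' l) (χ : Additive Fˣ →+ A)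
    (hA : ∀ t : A, t + t = 0)
    (hχ : ∀ P : (twoTorsionCurve a' b').Point, χ (.ofMul (descentUnit h.b'_ne_zero P)) = 0 →
      IsSquare (descentUnit h.b'_ne_zero P : F)) :
    h.isogeny.range.index ∣ Nat.card A :=
  index_dvd_card_of_ker_le (descentHom h.b'_ne_zero χ hA) fun P hP ↦
    h.mem_range_isogeny_of_isSquare (hχ P hP)

theorem index_twoSub_dvd (h : TwoIsogenous a b a' b' l) :
    (twoSub (twoTorsionCurve a b).Point).index ∣
      h.isogeny.range.index * h.dual.isogeny.range.index := by
  have hle : h.isogeny.range.map h.dual.isogeny ≤ twoSub (twoTorsionCurve a b).Point := by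
    rintro _ ⟨_, ⟨P, rfl⟩, rfl⟩
    exact ⟨P, (h.isogeny_dual_isogeny P).symm⟩
  refine (AddSubgroup.index_dvd_of_le hle).trans ?_
  rw [AddSubgroup.index_map]
  exact mul_dvd_mul_right (AddSubgroup.index_dvd_of_le le_sup_left) _

end TwoIsogenous

end Descent

section Ordered

variable {K : Type*} [Field K] [LinearOrder K] [IsStrictOrderedRing K]

/-- The sign, as an additive character of `Kˣ`. -/
def signParity : Additive Kˣ →+ ZMod 2 :=
  AddMonoidHom.mk' (fun u ↦ if (u.toMul : K) < 0 then 1 else 0) fun u v ↦ by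
    rw [toMul_add, Units.val_mul]
    rcases u.toMul.ne_zero.lt_or_gt with hu | hu <;> rcases v.toMul.ne_zero.lt_or_gt with hv | hv
    · rw [if_pos hu, if_pos hv, if_neg (mul_pos_of_neg_of_neg hu hv).not_gt,
        CharTwo.add_self_eq_zero]
    · rw [if_pos hu, if_neg hv.not_gt, if_pos (mul_neg_of_neg_of_pos hu hv), add_zero]
    · rw [if_neg hu.not_gt, if_pos hv, if_pos (mul_neg_of_pos_of_neg hu hv), zero_add]
    · rw [if_neg hu.not_gt, if_neg hv.not_gt, if_neg (mul_pos hu hv).not_gt, add_zero]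

lemma signParity_eq_zero_iff (u : Kˣ) : signParity (.ofMul u) = 0 ↔ 0 < (u : K) := by
  simp [signParity, u.ne_zero.symm.le_iff_lt]

lemma descentUnit_pos {a b : K} (hb : 0 < b) (hab : a ≤ 0 ∨ a ^ 2 < 4 * b)
    (P : (twoTorsionCurve a b).Point) : 0 < (descentUnit hb.ne' P : K) := by
  rcases P with _ | ⟨x, y, hxy⟩
  · rw [← Point.zero_def, descentUnit_zero, Units.val_one]
    exact one_pos
  by_cases hx : x = 0
  · subst hx
    rwa [descentUnit_some_zero, Units.val_mk0]
  rw [descentUnit_some hb.ne' hx, Units.val_mk0]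
  by_contra! hneg
  have hx_neg : x < 0 := hneg.lt_of_ne hx
  have hquad : 0 < x ^ 2 + a * x + b := by
    rcases hab with ha | hdisc
    · nlinarith [mul_nonneg_of_nonpos_of_nonpos ha hneg, sq_nonneg x]
    · nlinarith [sq_nonneg (2 * x + a)]
  have heq : y ^ 2 = x * (x ^ 2 + a * x + b) := by
    linear_combination equation_twoTorsionCurve_iff.1 hxy.1
  exact (sq_nonneg y).not_gt (heq ▸ mul_neg_of_neg_of_pos hx_neg hquad)

lemma pos_or_dual_pos {R : Type*} [CommRing R] [LinearOrder R] [IsStrictOrderedRing R]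
    {a b : R} (hb : b ≠ 0) (hab : a ^ 2 - 4 * b ≠ 0) :
    (0 < b ∧ (a ≤ 0 ∨ a ^ 2 < 4 * b)) ∨
      (0 < a ^ 2 - 4 * b ∧ (-2 * a ≤ 0 ∨ (-2 * a) ^ 2 < 4 * (a ^ 2 - 4 * b))) := by
  rcases hab.lt_or_gt with hlt | hgt
  · exact .inl ⟨by nlinarith [sq_nonneg a], .inr (sub_neg.1 hlt)⟩
  rcases hb.lt_or_gt with hb_neg | hb_pos
  · exact .inr ⟨hgt, .inr (by linarith)⟩
  rcases le_total a 0 with ha | ha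
  · exact .inl ⟨hb_pos, .inl ha⟩
  · exact .inr ⟨hgt, .inl (by linarith)⟩

end Ordered

section Rat

lemma isSquare_of_even_factorization {n : ℕ} (hn : n ≠ 0) (h : ∀ p, Even (n.factorization p)) :
    IsSquare n := by
  rw [← Nat.prod_factorization_pow_eq_self hn]
  exact Finset.isSquare_prod _ fun p _ ↦ (h p).isSquare_pow _

theorem isSquare_of_even_padicValRat {q : ℚ} (hq : 0 < q)
    (h : ∀ p : ℕ, p.Prime → Even (padicValRat p q)) : IsSquare q := by
  have hden : (q.den : ℚ) ≠ 0 := by exact_mod_cast q.den_nz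
  have hnat : ((q.num.natAbs * q.den : ℕ) : ℚ) = q * (q.den * q.den) := by
    rw [Nat.cast_mul, Nat.cast_natAbs, abs_of_pos (Rat.num_pos.2 hq), ← mul_assoc,
      Rat.mul_den_eq_num]
  have hsq : IsSquare (q.num.natAbs * q.den) := by
    refine isSquare_of_even_factorization
      (mul_ne_zero (by simpa using hq.ne') q.den_nz) fun p ↦ ?_
    by_cases hp : p.Prime
    · have : Fact p.Prime := ⟨hp⟩
      rw [Nat.factorization_def _ hp, ← Int.even_coe_nat, ← padicValRat.of_nat, hnat,
        padicValRat.mul hq.ne' (mul_ne_zero hden hden), padicValRat.mul hden hden]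
      exact (h p hp).add (Even.add_self _)
    · rw [Nat.factorization_eq_zero_of_not_prime _ hp]
      exact Even.zero
  rw [eq_div_of_mul_eq (mul_ne_zero hden hden) hnat.symm]
  exact (hsq.map (Nat.castRingHom ℚ)).div (IsSquare.mul_self _)

lemma even_padicValRat_of_padicNorm_eq_sq {p : ℕ} [Fact p.Prime] {x g : ℚ} (hx : x ≠ 0)
    (h : padicNorm p x = padicNorm p g ^ 2) : Even (padicValRat p x) := by
  have hp : (1 : ℚ) < p := by exact_mod_cast (Fact.out : p.Prime).one_lt
  have hg : g ≠ 0 := by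
    rintro rfl
    exact padicNorm.nonzero hx (by simpa using h)
  rw [padicNorm.eq_zpow_of_nonzero hx, padicNorm.eq_zpow_of_nonzero hg, ← zpow_natCast, ← zpow_mul,
    zpow_right_inj₀ (by positivity) hp.ne'] at h
  exact ⟨padicValRat p g, by push_cast at h; linarith⟩

lemma exists_padicNorm_eq_sq {p : ℕ} [Fact p.Prime] {a b : ℤ} (hb : ¬(p : ℤ) ∣ b)
    {x y : ℚ} (hx : x ≠ 0) (h : y ^ 2 = x ^ 3 + a * x ^ 2 + b * x) :
    ∃ g, padicNorm p x = padicNorm p g ^ 2 := by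
  have ha : padicNorm p a ≤ 1 := padicNorm.of_int a
  have hb : padicNorm p b = 1 := padicNorm.int_eq_one_iff b |>.2 hb
  have hx_pos : 0 < padicNorm p x := (padicNorm.nonneg x).lt_of_ne' (padicNorm.nonzero hx)
  have hy : padicNorm p y ^ 2 = padicNorm p x * padicNorm p (x * (x + a) + b) := by
    rw [sq, ← padicNorm.mul, ← padicNorm.mul]
    congr 1
    linear_combination h
  rcases lt_trichotomy (padicNorm p x) 1 with hlt | heq | hgt
  · refine ⟨y, ?_⟩
    have hsmall : padicNorm p (x * (x + a)) < padicNorm p b := by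
      have hxa : padicNorm p (x + a) ≤ 1 := padicNorm.nonarchimedean.trans (max_le hlt.le ha)
      rw [padicNorm.mul, hb]
      nlinarith
    rw [hy, padicNorm.add_eq_max_of_ne hsmall.ne, max_eq_right hsmall.le, hb, mul_one]
  · exact ⟨1, by simp [heq]⟩
  · refine ⟨y / x, ?_⟩
    have hxa : padicNorm p (x + a) = padicNorm p x := by
      have := ha.trans_lt hgt
      rw [padicNorm.add_eq_max_of_ne this.ne', max_eq_left this.le]
    have hlarge : padicNorm p b < padicNorm p (x * (x + a)) := by
      rw [padicNorm.mul, hxa, hb]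
      nlinarith
    rw [padicNorm.div, div_pow, hy, padicNorm.add_eq_max_of_ne hlarge.ne', max_eq_left hlarge.le,
      padicNorm.mul, hxa]
    field_simp

/-- The parity of the `p`-adic valuation, as a character of `ℚˣ`. -/
noncomputable def padicParity (p : ℕ) (hp : p.Prime) : Additive ℚˣ →+ ZMod 2 :=
  AddMonoidHom.mk' (fun u ↦ (padicValRat p (u.toMul : ℚ) : ZMod 2)) fun u v ↦ by
    have : Fact p.Prime := ⟨hp⟩
    rw [toMul_add, Units.val_mul, padicValRat.mul u.toMul.ne_zero v.toMul.ne_zero, Int.cast_add]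

lemma padicParity_eq_zero_iff {p : ℕ} (hp : p.Prime) (u : ℚˣ) :
    padicParity p hp (.ofMul u) = 0 ↔ Even (padicValRat p (u : ℚ)) :=
  ZMod.intCast_eq_zero_iff_even

/-- The parities of the valuations at the prime divisors of `n`. -/
noncomputable def padicParities (n : ℕ) : Additive ℚˣ →+ (n.primeFactors → ZMod 2) :=
  AddMonoidHom.pi fun p ↦ padicParity p (Nat.prime_of_mem_primeFactors p.2)

lemma padicParities_add_self {n : ℕ} (t : n.primeFactors → ZMod 2) : t + t = 0 :=
  funext fun _ ↦ CharTwo.add_self_eq_zero _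

lemma card_padicParities (n : ℕ) :
    Nat.card (n.primeFactors → ZMod 2) = 2 ^ n.primeFactors.card := by
  rw [Nat.card_fun, Nat.card_zmod, Nat.card_eq_fintype_card, Fintype.card_coe]

lemma even_padicValRat_descentUnit {a b : ℤ} (hb : (b : ℚ) ≠ 0) {p : ℕ} (hp : p.Prime)
    (hpb : ¬(p : ℤ) ∣ b) (P : (twoTorsionCurve (a : ℚ) b).Point) :
    Even (padicValRat p (descentUnit hb P : ℚ)) := by
  have : Fact p.Prime := ⟨hp⟩
  rcases P with _ | ⟨x, y, hxy⟩
  · rw [← Point.zero_def, descentUnit_zero, Units.val_one, padicValRat.one]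
    exact Even.zero
  by_cases hx : x = 0
  · subst hx
    rw [descentUnit_some_zero, Units.val_mk0, padicValRat.of_int,
      padicValInt.eq_zero_of_not_dvd hpb]
    exact Even.zero
  · rw [descentUnit_some hb hx, Units.val_mk0]
    obtain ⟨g, hg⟩ := exists_padicNorm_eq_sq hpb hx (equation_twoTorsionCurve_iff.1 hxy.1)
    exact even_padicValRat_of_padicNorm_eq_sq hx hg

theorem isSquare_descentUnit {a b : ℤ} (hb : (b : ℚ) ≠ 0) {P : (twoTorsionCurve (a : ℚ) b).Point}
    (hpos : 0 < (descentUnit hb P : ℚ))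
    (hP : padicParities b.natAbs (.ofMul (descentUnit hb P)) = 0) :
    IsSquare (descentUnit hb P : ℚ) := by
  refine isSquare_of_even_padicValRat hpos fun p hp ↦ ?_
  by_cases hpb : (p : ℤ) ∣ b
  · have hmem : p ∈ b.natAbs.primeFactors :=
      Nat.mem_primeFactors.2
        ⟨hp, Int.natCast_dvd.1 hpb, Int.natAbs_ne_zero.2 (Int.cast_ne_zero.1 hb)⟩
    exact (padicParity_eq_zero_iff hp _).1 (congrFun hP ⟨p, hmem⟩)
  · exact even_padicValRat_descentUnit hb hp hpb P

namespace TwoIsogenous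

variable {a b l : ℚ} {a' b' : ℤ}

lemma index_range_isogeny_dvd_two_pow_succ (h : TwoIsogenous a b (a' : ℚ) (b' : ℚ) l) :
    h.isogeny.range.index ∣ 2 ^ (b'.natAbs.primeFactors.card + 1) := by
  rw [pow_succ, ← card_padicParities]
  nth_rw 2 [← Nat.card_zmod 2]
  rw [← Nat.card_prod]
  refine h.index_range_isogeny_dvd_card ((padicParities b'.natAbs).prod signParity)
    (fun t ↦ Prod.ext (padicParities_add_self t.1) (CharTwo.add_self_eq_zero t.2)) fun P hP ↦ ?_
  obtain ⟨hparities, hsign⟩ := Prod.ext_iff.1 hP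
  exact isSquare_descentUnit _ ((signParity_eq_zero_iff _).1 hsign) hparities

lemma index_range_isogeny_dvd_two_pow (h : TwoIsogenous a b (a' : ℚ) (b' : ℚ) l)
    (hb' : 0 < b') (hab' : a' ≤ 0 ∨ a' ^ 2 < 4 * b') :
    h.isogeny.range.index ∣ 2 ^ b'.natAbs.primeFactors.card := by
  rw [← card_padicParities]
  exact h.index_range_isogeny_dvd_card (padicParities b'.natAbs) padicParities_add_self fun P ↦
    isSquare_descentUnit _ (descentUnit_pos (by exact_mod_cast hb') (by exact_mod_cast hab') P)

end TwoIsogenous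

lemma twoIsogenous_intCast {a b : ℤ} (hb : b ≠ 0) (hab : a ^ 2 - 4 * b ≠ 0) :
    TwoIsogenous (a : ℚ) (b : ℚ) ((-2 * a : ℤ) : ℚ) ((a ^ 2 - 4 * b : ℤ) : ℚ) 1 where
  two_ne_zero := two_ne_zero
  scale_ne_zero := one_ne_zero
  b_ne_zero := by exact_mod_cast hb
  b'_ne_zero := by exact_mod_cast hab
  a'_eq := by push_cast; ring
  b'_eq := by push_cast; ring

theorem index_twoSub_dvd_two_pow {a b : ℤ} (hb : b ≠ 0) (hab : a ^ 2 - 4 * b ≠ 0) :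
    (twoSub (twoTorsionCurve (a : ℚ) (b : ℚ)).Point).index ∣
      2 ^ (b.natAbs.primeFactors.card + (a ^ 2 - 4 * b).natAbs.primeFactors.card + 1) := by
  have h := twoIsogenous_intCast hb hab
  refine h.index_twoSub_dvd.trans ?_
  rcases pos_or_dual_pos hb hab with ⟨hpos, hroots⟩ | ⟨hpos, hroots⟩
  · rw [show ∀ m n : ℕ, m + n + 1 = n + 1 + m by lia, pow_add]
    exact mul_dvd_mul h.index_range_isogeny_dvd_two_pow_succ
      (h.dual.index_range_isogeny_dvd_two_pow hpos hroots)
  · rw [show ∀ m n : ℕ, m + n + 1 = n + (m + 1) by lia, pow_add]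
    exact mul_dvd_mul (h.index_range_isogeny_dvd_two_pow hpos hroots)
      h.dual.index_range_isogeny_dvd_two_pow_succ

lemma card_primeFactors_le_of_dvd_pow {m n : ℤ} (hn : n ≠ 0) {k : ℕ} (h : m ∣ n ^ k) :
    m.natAbs.primeFactors.card ≤ n.natAbs.primeFactors.card := by
  refine Finset.card_le_card fun p hp ↦ ?_
  obtain ⟨hp, hpm, -⟩ := Nat.mem_primeFactors.1 hp
  have hpn : p ∣ n.natAbs ^ k := hpm.trans (Int.natAbs_pow n k ▸ Int.natAbs_dvd_natAbs.2 h)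
  exact Nat.mem_primeFactors.2 ⟨hp, hp.dvd_of_dvd_pow hpn, Int.natAbs_ne_zero.2 hn⟩

end Rat

end TwoDescent

theorem stmt5_general (a b : ℤ) (hb : b ≠ 0) (hab : a ^ 2 - 4 * b ≠ 0) :
    Finite ((TwoDescent.twoTorsionCurve (a : ℚ) (b : ℚ)).Point ⧸
        twoSub (TwoDescent.twoTorsionCurve (a : ℚ) (b : ℚ)).Point) ∧
      Nat.card ((TwoDescent.twoTorsionCurve (a : ℚ) (b : ℚ)).Point ⧸
        twoSub (TwoDescent.twoTorsionCurve (a : ℚ) (b : ℚ)).Point) ≤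
        2 ^ (b.natAbs.primeFactors.card + (a ^ 2 - 4 * b).natAbs.primeFactors.card + 1) := by
  have hdvd := TwoDescent.index_twoSub_dvd_two_pow hb hab
  have : (twoSub (TwoDescent.twoTorsionCurve (a : ℚ) (b : ℚ)).Point).FiniteIndex :=
    ⟨ne_zero_of_dvd_ne_zero (by positivity) hdvd⟩
  exact ⟨AddSubgroup.finite_quotient_of_finiteIndex, Nat.le_of_dvd (by positivity) hdvd⟩

/-- For `D` a nonzero fourth-power-free integer and `ν(2D)` the number of distinct
prime divisors of `2D`, the group `E_D(ℚ)/2E_D(ℚ)` is finite of order at most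
`2 ^ (2·ν(2D) + 1)`. -/
theorem stmt5 (D : ℤ) (hD : D ≠ 0) (hfree : ∀ q : ℤ, Prime q → ¬ q ^ 4 ∣ D) :
    Finite ((EDcurve (D : ℚ)).Point ⧸ twoSub (EDcurve (D : ℚ)).Point) ∧
      Nat.card ((EDcurve (D : ℚ)).Point ⧸ twoSub (EDcurve (D : ℚ)).Point) ≤
        2 ^ (2 * (2 * D).natAbs.primeFactors.card + 1) := by
  obtain ⟨hfin, hcard⟩ := stmt5_general 0 D hD (by simpa using hD)
  refine ⟨hfin, hcard.trans (Nat.pow_le_pow_right two_pos (Nat.succ_le_succ ?_))⟩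
  have h2D : 2 * D ≠ 0 := mul_ne_zero two_ne_zero hD
  rw [two_mul (Finset.card _)]
  exact add_le_add
    (TwoDescent.card_primeFactors_le_of_dvd_pow h2D (k := 1) ⟨2, by ring⟩)
    (TwoDescent.card_primeFactors_le_of_dvd_pow h2D (k := 2) ⟨-D, by ring⟩)
end

section
/- Let p be an odd prime. Then there are no W, Z in the field ℚ₂ of 2-adic numbers satisfying 2·W² = 4 + p·Z⁴. -/
/-! For the 2-adic valuation `v`, the coefficients of `b W² = c + a Z⁴` with `a = p`, `b = 2`,
`c = 4` have `v a = 0`, `v b = 1`, `v c = 2`; only the residues of these modulo 4, 2, 4 matter.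
Since `v (a Z⁴)` is infinite or `≡ 0 (mod 4)` while `v c ≡ 2 (mod 4)`, the two differ, so
`v (c + a Z⁴)` is the smaller of them, which is finite and even. But `v (b W²)` is odd or
infinite. -/

section AddValuation

variable {R : Type*} [Ring R] (v : AddValuation R (WithTop ℤ)) {a b c x : R} {k l m : ℤ}

lemma modEq_of_addValuation_mul_pow_eq {n : ℕ} (ha : v a = k) (h : v (a * x ^ n) = m) :
    m ≡ k [ZMOD n] := by
  rw [v.map_mul, v.map_pow, ha] at h
  cases hx : v x with
  | top =>
    cases n with
    | zero => simp_all
    | succ n => simp [hx, succ_nsmul] at h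
  | coe w =>
    rw [hx] at h
    have hm : k + n * w = m := by exact_mod_cast h
    simp [← hm]

theorem stmt7_general (ha : v a = k) (hb : v b = l) (hc : v c = m)
    (hk : k ≡ 0 [ZMOD 4]) (hl : Odd l) (hm : m ≡ 2 [ZMOD 4]) :
    ¬ ∃ W Z : R, b * W ^ 2 = c + a * Z ^ 4 := by
  rintro ⟨W, Z, h⟩
  have hne : v c ≠ v (a * Z ^ 4) := fun heq ↦ by
    have hmk : m ≡ k [ZMOD 4] := modEq_of_addValuation_mul_pow_eq v ha (heq.symm.trans hc)
    exact absurd (hm.symm.trans (hmk.trans hk)) (by decide)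
  have hmin : v (b * W ^ 2) = min (v c) (v (a * Z ^ 4)) := by
    rw [h, v.map_add_of_distinct_val hne]
  obtain ⟨j, hj⟩ : ∃ j : ℤ, v (b * W ^ 2) = j := by
    have hle : v (b * W ^ 2) ≤ m := hc ▸ hmin.trans_le (min_le_left _ _)
    obtain ⟨j, hj, -⟩ := WithTop.le_coe_iff.mp hle
    exact ⟨j, hj⟩
  have hj_odd : Odd j := by
    have hjl : j ≡ l [ZMOD 2] := modEq_of_addValuation_mul_pow_eq v hb hj
    grind [Int.ModEq]
  have hj_even : Even j := by
    obtain hmin_c | hmin_a := min_choice (v c) (v (a * Z ^ 4))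
    · have hjm : j = m := by exact_mod_cast hj.symm.trans (hmin.trans (hmin_c.trans hc))
      grind [Int.ModEq]
    · have hjk : j ≡ k [ZMOD 4] :=
        modEq_of_addValuation_mul_pow_eq v ha (hmin_a.symm.trans (hmin.symm.trans hj))
      grind [Int.ModEq]
  exact Int.not_even_iff_odd.mpr hj_odd hj_even

end AddValuation

section Padic

variable {p : ℕ} [Fact p.Prime]

lemma padic_addValuation_prime_pow (n : ℕ) :
    Padic.addValuation ((p : ℚ_[p]) ^ n) = (n : ℤ) := by
  have hp : (p : ℚ_[p]) ≠ 0 := Nat.cast_ne_zero.mpr (Fact.out : p.Prime).ne_zero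
  rw [Padic.addValuation.apply (pow_ne_zero n hp), Padic.valuation_pow,
    Padic.valuation_p, mul_one]

lemma padic_addValuation_natCast_of_not_dvd {n : ℕ} (hn : ¬ p ∣ n) :
    Padic.addValuation (n : ℚ_[p]) = (0 : ℤ) := by
  have hn0 : (n : ℚ_[p]) ≠ 0 := Nat.cast_ne_zero.mpr fun h ↦ hn (h ▸ dvd_zero p)
  rw [Padic.addValuation.apply hn0, Padic.valuation_natCast, padicValNat.eq_zero_of_not_dvd hn,
    Nat.cast_zero]

lemma padic_addValuation_two : Padic.addValuation (2 : ℚ_[2]) = (1 : ℤ) := by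
  simpa only [Nat.cast_ofNat, pow_one, Nat.cast_one] using
    padic_addValuation_prime_pow (p := 2) 1

lemma padic_addValuation_four : Padic.addValuation (4 : ℚ_[2]) = (2 : ℤ) := by
  have h4 : (4 : ℚ_[2]) = (2 : ℕ) ^ 2 := by norm_num
  rw [h4, padic_addValuation_prime_pow, Nat.cast_ofNat]

end Padic

/-- For an odd prime `p`, the equation `2·W² = 4 + p·Z⁴` has no solutions in the
field `ℚ₂` of 2-adic numbers. -/
theorem stmt7 (p : ℕ) (hp : p.Prime) (hodd : p ≠ 2) :
    ¬ ∃ W Z : ℚ_[2], 2 * W ^ 2 = 4 + (p : ℚ_[2]) * Z ^ 4 := by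
  have h2p : ¬ 2 ∣ p := (hp.odd_of_ne_two hodd).not_two_dvd_nat
  exact stmt7_general Padic.addValuation (padic_addValuation_natCast_of_not_dvd h2p)
    padic_addValuation_two padic_addValuation_four rfl odd_one rfl
end

section
/- Let p be an odd prime. Then there exist z, w in the field ℚ_p of p-adic numbers satisfying w² = 4·p·z⁴ − 1 if and only if p ≡ 1 (mod 4). -/
/-!
Write the equation as `w² = p (2z²)² - 1`. If `z ≠ 0`, the term `p (2z²)²` has odd valuation, so its
absolute value is not `1`; nor does it exceed `1`, since it would then dominate the right-hand side
and be the absolute value of a square. Hence a solution has `w` integral and reduces to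
`w² = -1` in `ZMod p`. Conversely, for odd `p` a square root of `-1` modulo `p` lifts to `ℤ_[p]` by
Hensel's lemma and solves the equation with `z = 0`.
-/

open Polynomial in
lemma isSquare_of_sq_sub_mem {R : Type*} [CommRing R] {I : Ideal R} [HenselianRing R I] {s c : R}
    (h_two : IsUnit (2 : R)) (hc : IsUnit c) (h : s ^ 2 - c ∈ I) : IsSquare c := by
  have h_root : (X ^ 2 - C c).eval s ∈ I := by simpa using h
  have h_mod : Ideal.Quotient.mk I (s ^ 2) = Ideal.Quotient.mk I c := Ideal.Quotient.eq.mpr h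
  have hs : IsUnit (Ideal.Quotient.mk I s) := by
    rw [← isUnit_pow_iff two_ne_zero, ← map_pow, h_mod]
    exact hc.map _
  have h_deriv : IsUnit (Ideal.Quotient.mk I ((X ^ 2 - C c).derivative.eval s)) := by
    simpa [one_add_one_eq_two] using (h_two.map (Ideal.Quotient.mk I)).mul hs
  obtain ⟨t, ht, -⟩ := HenselianRing.is_henselian (X ^ 2 - C c)
    (monic_X_pow_sub_C c two_ne_zero) s h_root h_deriv
  rw [IsRoot.def, eval_sub, eval_pow, eval_X, eval_C, sub_eq_zero] at ht
  exact ht ▸ IsSquare.sq t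

section PadicSquares

variable {p : ℕ} [Fact p.Prime]

lemma valuation_eq_of_norm_eq {x y : ℚ_[p]} (h : ‖x‖ = ‖y‖) : x.valuation = y.valuation := by
  rcases eq_or_ne x 0 with rfl | hx
  · rw [norm_eq_zero.mp (h.symm.trans norm_zero)]
  have hy : y ≠ 0 := norm_ne_zero_iff.mp (h ▸ norm_ne_zero_iff.mpr hx)
  have hp : (1 : ℝ) < p := mod_cast (Fact.out : p.Prime).one_lt
  rw [Padic.norm_eq_zpow_neg_valuation hx, Padic.norm_eq_zpow_neg_valuation hy] at h
  exact neg_injective (zpow_right_injective₀ (zero_lt_one.trans hp) hp.ne' h)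

lemma norm_sq_ne_of_odd_valuation {x : ℚ_[p]} (hx : Odd x.valuation) (w : ℚ_[p]) :
    ‖w ^ 2‖ ≠ ‖x‖ := by
  intro h
  rw [← valuation_eq_of_norm_eq h, Padic.valuation_pow, Nat.cast_ofNat] at hx
  exact Int.not_odd_iff_even.mpr (even_two_mul _) hx

lemma norm_lt_one_of_odd_valuation_of_sq_eq_add {x w : ℚ_[p]} {c : ℤ_[p]}
    (hx : Odd x.valuation) (h : w ^ 2 = x + c) : ‖x‖ < 1 := by
  have hx_ne : ‖x‖ ≠ 1 := by simpa using (norm_sq_ne_of_odd_valuation hx 1).symm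
  refine lt_of_not_ge fun hx_ge ↦ norm_sq_ne_of_odd_valuation hx w ?_
  have hc : ‖(c : ℚ_[p])‖ < ‖x‖ := c.2.trans_lt (hx_ge.lt_of_ne' hx_ne)
  rw [h, Padic.add_eq_max_of_ne hc.ne', max_eq_left hc.le]

lemma toZMod_eq_zero_of_norm_lt_one {x : ℤ_[p]} (hx : ‖x‖ < 1) : PadicInt.toZMod x = 0 := by
  rwa [← RingHom.mem_ker, PadicInt.ker_toZMod, IsLocalRing.mem_maximalIdeal,
    PadicInt.mem_nonunits]

lemma isSquare_toZMod_of_norm_lt_one_of_sq_eq_add {x w : ℚ_[p]} {c : ℤ_[p]} (hx : ‖x‖ < 1)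
    (h : w ^ 2 = x + c) : IsSquare (PadicInt.toZMod c) := by
  obtain ⟨x, rfl⟩ : ∃ x' : ℤ_[p], (x' : ℚ_[p]) = x := ⟨⟨x, hx.le⟩, rfl⟩
  have hw : ‖w‖ ≤ 1 := by
    rw [← pow_le_one_iff_of_nonneg (norm_nonneg w) two_ne_zero, ← norm_pow, h]
    exact (x + c).2
  obtain ⟨w, rfl⟩ : ∃ w' : ℤ_[p], (w' : ℚ_[p]) = w := ⟨⟨w, hw⟩, rfl⟩
  have h_int : w ^ 2 = x + c := PadicInt.ext (mod_cast h)
  have h_mod := congrArg PadicInt.toZMod h_int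
  rw [map_pow, map_add, toZMod_eq_zero_of_norm_lt_one hx, zero_add] at h_mod
  exact h_mod ▸ IsSquare.sq _

lemma isSquare_toZMod_of_odd_valuation_of_sq_eq_mul_sq_add {a u w : ℚ_[p]} {c : ℤ_[p]}
    (ha : Odd a.valuation) (h : w ^ 2 = a * u ^ 2 + c) : IsSquare (PadicInt.toZMod c) := by
  refine isSquare_toZMod_of_norm_lt_one_of_sq_eq_add ?_ h
  rcases eq_or_ne u 0 with rfl | hu
  · simp
  have ha_ne : a ≠ 0 := by rintro rfl; simp at ha
  refine norm_lt_one_of_odd_valuation_of_sq_eq_add ?_ h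
  rw [Padic.valuation_mul ha_ne (pow_ne_zero 2 hu), Padic.valuation_pow, Nat.cast_ofNat]
  exact ha.add_even (even_two_mul _)

lemma isUnit_two_padicInt (hp : p ≠ 2) : IsUnit (2 : ℤ_[p]) := by
  rw [PadicInt.isUnit_iff, ← Nat.cast_ofNat, PadicInt.norm_natCast_eq_one_iff]
  exact (Nat.coprime_primes Fact.out Nat.prime_two).mpr hp

lemma isSquare_of_isSquare_toZMod (hp : p ≠ 2) {c : ℤ_[p]} (hc : IsUnit c)
    (h : IsSquare (PadicInt.toZMod c)) : IsSquare c := by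
  obtain ⟨r, hr⟩ := h
  obtain ⟨s, rfl⟩ := ZMod.ringHom_surjective PadicInt.toZMod r
  refine isSquare_of_sq_sub_mem (I := IsLocalRing.maximalIdeal ℤ_[p]) (s := s)
    (isUnit_two_padicInt hp) hc ?_
  rw [← PadicInt.ker_toZMod, RingHom.mem_ker, map_sub, map_pow, hr, sq, sub_self]

end PadicSquares

/-- For an odd prime `p`, the equation `w² = 4·p·z⁴ − 1` has a solution in the field
`ℚ_p` of `p`-adic numbers if and only if `p ≡ 1 (mod 4)`. -/
theorem stmt8 (p : ℕ) [Fact p.Prime] (hodd : p ≠ 2) :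
    (∃ z w : ℚ_[p], w ^ 2 = 4 * (p : ℚ_[p]) * z ^ 4 - 1) ↔ p % 4 = 1 := by
  have hp : p % 2 = 1 := (Fact.out : p.Prime).eq_two_or_odd.resolve_left hodd
  have h_mod : IsSquare (PadicInt.toZMod (-1 : ℤ_[p])) ↔ p % 4 = 1 := by
    rw [map_neg, map_one, ZMod.exists_sq_eq_neg_one_iff]
    omega
  rw [← h_mod]
  constructor
  · rintro ⟨z, w, h⟩
    have h' : w ^ 2 = p * (2 * z ^ 2) ^ 2 + (-1 : ℤ_[p]) := by
      push_cast
      linear_combination h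
    exact isSquare_toZMod_of_odd_valuation_of_sq_eq_mul_sq_add (by simp) h'
  · intro h
    obtain ⟨s, hs⟩ := isSquare_of_isSquare_toZMod hodd isUnit_one.neg h
    have hs' : (-1 : ℚ_[p]) = s * s := mod_cast congrArg ((↑) : ℤ_[p] → ℚ_[p]) hs
    exact ⟨0, s, by linear_combination -hs'⟩
end

section
/- Let p be a prime with p ≡ 1 (mod 8), and let A, B be integers with p = A² + B² and A·B ≡ 0 (mod 4). Then 2 is a quartic residue modulo p (i.e., there exists x with x⁴ ≡ 2 (mod p)) if and only if A·B ≡ 0 (mod 8). -/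
/-!
The argument is Dirichlet's. Say `p = a² + b²` with `a` odd, so that `f = b / a` is a square root
of `-1` modulo `p`. Modulo `p` we have `(a + b)² = 2ab = 2f a²`; raise this to the power
`(p - 1) / 4`. Quadratic reciprocity for the Jacobi symbol turns `p = a² + b²` into
`a^((p - 1) / 2) = 1` and `2p = (2b)² + (a + b)(2a - 2b)` into
`(a + b)^((p - 1) / 2) = (-1)^m = f^(2m)`, where `(a + b)² = 8m + 1`. Since
`2m = (p - 1) / 4 + ab / 2`, what remains is `2^((p - 1) / 4) = f^(ab / 2)`. As `f` has order `4`,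
this is `1` exactly when `8` divides `ab`.
-/

open scoped NumberTheorySymbols

theorem range_powMonoidHom_eq_ker_of_dvd_card {G : Type*} [CommGroup G] [IsCyclic G] [Finite G]
    {n : ℕ} (hn : n ∣ Nat.card G) :
    (powMonoidHom n : G →* G).range = (powMonoidHom (Nat.card G / n) : G →* G).ker := by
  apply Subgroup.eq_of_le_of_card_ge
  · rintro _ ⟨y, rfl⟩
    simp only [MonoidHom.mem_ker, powMonoidHom_apply]
    rw [← pow_mul, Nat.mul_div_cancel' hn, pow_card_eq_one']
  · rw [IsCyclic.card_powMonoidHom_ker, IsCyclic.card_powMonoidHom_range,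
      Nat.gcd_eq_right hn, Nat.gcd_eq_right (Nat.div_dvd_of_dvd hn)]

theorem exists_pow_eq_iff_pow_card_sub_one_div_eq_one {F : Type*} [Field F] [Finite F] {n : ℕ}
    (hn : n ∣ Nat.card F - 1) {a : F} (ha : a ≠ 0) :
    (∃ x, x ^ n = a) ↔ a ^ ((Nat.card F - 1) / n) = 1 := by
  rw [← Nat.card_units] at hn ⊢
  have hn0 : n ≠ 0 := ne_zero_of_dvd_ne_zero Nat.card_pos.ne' hn
  lift a to Fˣ using ha.isUnit
  have units_iff : (∃ y : Fˣ, y ^ n = a) ↔ a ^ (Nat.card Fˣ / n) = 1 :=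
    SetLike.ext_iff.mp (range_powMonoidHom_eq_ker_of_dvd_card hn) a
  rw [← Units.val_pow_eq_pow_val, Units.val_eq_one, ← units_iff]
  constructor
  · rintro ⟨x, hx⟩
    lift x to Fˣ using (isUnit_pow_iff hn0).mp (hx ▸ a.isUnit)
    exact ⟨x, Units.ext hx⟩
  · rintro ⟨y, rfl⟩
    exact ⟨y, rfl⟩

theorem exists_int_pow_modEq_iff (m n : ℕ) (a : ℤ) :
    (∃ x : ℤ, x ^ n ≡ a [ZMOD m]) ↔ ∃ x : ZMod m, x ^ n = a := by
  simp only [ZMod.intCast_surjective.exists, ← ZMod.intCast_eq_intCast_iff, Int.cast_pow]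

theorem orderOf_eq_four_of_sq_eq_neg_one {R : Type*} [Monoid R] [HasDistribNeg R]
    (h : (-1 : R) ≠ 1) {f : R} (hf : f ^ 2 = -1) : orderOf f = 4 := by
  refine orderOf_eq_prime_pow (p := 2) (n := 1) ?_ ?_
  · rwa [pow_one, hf]
  · rw [pow_succ, pow_one, pow_mul, hf, neg_one_sq]

theorem intCast_jacobiSym_eq_pow {p : ℕ} [Fact p.Prime] (n : ℤ) :
    (J(n | p) : ZMod p) = (n : ZMod p) ^ (p / 2) := by
  rw [← jacobiSym.legendreSym.to_jacobiSym, legendreSym.eq_pow]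

theorem χ₈_eq_neg_one_pow {n : ℕ} (hn : Odd n) : ZMod.χ₈ n = (-1) ^ ((n ^ 2 - 1) / 8) := by
  obtain ⟨q, r, hr, rfl⟩ : ∃ q r, r < 8 ∧ n = 8 * q + r :=
    ⟨n / 8, n % 8, Nat.mod_lt n (by norm_num), (Nat.div_add_mod n 8).symm⟩
  have hr_odd : Odd r := by grind
  have small : ∀ r : ℕ, r < 8 → Odd r → ZMod.χ₈ r = (-1) ^ ((r ^ 2 - 1) / 8) := by decide
  have exponent : ((8 * q + r) ^ 2 - 1) / 8 = 2 * (4 * q ^ 2 + q * r) + (r ^ 2 - 1) / 8 := by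
    have hsq : (8 * q + r) ^ 2 = 8 * (2 * (4 * q ^ 2 + q * r)) + r ^ 2 := by ring
    have hr_pos : 0 < r ^ 2 := pow_pos hr_odd.pos 2
    omega
  rw [ZMod.χ₈_nat_mod_eight, Nat.mul_add_mod, Nat.mod_eq_of_lt hr, small r hr hr_odd, exponent,
    pow_add, pow_mul, neg_one_sq, one_pow, one_mul]

section SumOfTwoSquares

variable {a b : ℕ}

theorem coprime_of_squarefree_sq_add_sq (h : Squarefree (a ^ 2 + b ^ 2)) : a.Coprime b := by
  refine Nat.isUnit_iff.mp (h (a.gcd b) ?_)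
  rw [← sq]
  exact dvd_add (pow_dvd_pow_of_dvd (a.gcd_dvd_left b) 2) (pow_dvd_pow_of_dvd (a.gcd_dvd_right b) 2)

theorem sq_add_sq_mod_four_eq_one (ha : Odd a) (hb : Even b) : (a ^ 2 + b ^ 2) % 4 = 1 := by
  obtain ⟨c, rfl⟩ := ha
  obtain ⟨d, rfl⟩ := hb
  ring_nf
  omega

theorem jacobiSym_sq_add_sq_eq_one (ha : Odd a) (hb : Even b) (hab : a.Coprime b) :
    J(a | a ^ 2 + b ^ 2) = 1 := by
  rw [jacobiSym.quadratic_reciprocity_one_mod_four' ha (sq_add_sq_mod_four_eq_one ha hb)]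
  have mod_a : ((a ^ 2 + b ^ 2 : ℕ) : ℤ) % a = (b : ℤ) ^ 2 % a := by
    push_cast
    rw [sq (a : ℤ), Int.mul_add_emod_self_left]
  rw [jacobiSym.mod_left' mod_a]
  exact jacobiSym.sq_one' hab.symm

theorem jacobiSym_add_sq_add_sq_eq_χ₈ (ha : Odd a) (hb : Even b) (hab : a.Coprime b) :
    J((a + b : ℕ) | a ^ 2 + b ^ 2) = ZMod.χ₈ (a + b : ℕ) := by
  have hodd : Odd (a + b) := ha.add_even hb
  have hcop : (2 * b).Coprime (a + b) :=
    (Nat.coprime_two_left.mpr hodd).mul_left (by simpa using hab.symm)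
  have mod_add : (2 * (a ^ 2 + b ^ 2 : ℕ) : ℤ) % (a + b : ℕ) =
      ((2 * b : ℕ) : ℤ) ^ 2 % (a + b : ℕ) := by
    have expand : (2 * (a ^ 2 + b ^ 2 : ℕ) : ℤ) =
        ((2 * b : ℕ) : ℤ) ^ 2 + (a + b : ℕ) * (2 * a - 2 * b) := by
      push_cast
      ring
    rw [expand, Int.add_mul_emod_self_left]
  have two_mul : J(2 | a + b) * J((a ^ 2 + b ^ 2 : ℕ) | a + b) = 1 := by
    rw [← jacobiSym.mul_left, jacobiSym.mod_left' mod_add]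
    exact jacobiSym.sq_one' hcop
  rw [jacobiSym.quadratic_reciprocity_one_mod_four' hodd (sq_add_sq_mod_four_eq_one ha hb),
    ← jacobiSym.at_two hodd]
  exact (Int.eq_of_mul_eq_one two_mul).symm

theorem two_mul_add_sq_sub_one_div_eight (ha : Odd a) (hb : Even b) :
    2 * (((a + b) ^ 2 - 1) / 8) = (a ^ 2 + b ^ 2 - 1) / 4 + a * b / 2 := by
  have add_sq_mod : 8 ∣ (a + b) ^ 2 - 1 := Nat.eight_dvd_sq_sub_one_of_odd (ha.add_even hb)
  have sq_add_sq_mod := sq_add_sq_mod_four_eq_one ha hb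
  have mul_even : 2 ∣ a * b := hb.two_dvd.mul_left a
  have expand : (a + b) ^ 2 = a ^ 2 + b ^ 2 + 2 * (a * b) := by ring
  omega

variable {p : ℕ}

theorem natCast_sq_add_sq_eq_zero (hp : p = a ^ 2 + b ^ 2) :
    (a : ZMod p) ^ 2 + (b : ZMod p) ^ 2 = 0 := by
  exact_mod_cast (ZMod.natCast_eq_zero_iff _ _).mpr hp.dvd

variable [Fact p.Prime]

theorem coprime_of_prime_eq_sq_add_sq (hp : p = a ^ 2 + b ^ 2) : a.Coprime b :=
  coprime_of_squarefree_sq_add_sq (hp ▸ (Fact.out : p.Prime).prime.squarefree)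

theorem natCast_ne_zero_of_eq_sq_add_sq (hp : p = a ^ 2 + b ^ 2) : (a : ZMod p) ≠ 0 := by
  refine ((ZMod.isUnit_iff_coprime a p).mpr ?_).ne_zero
  simpa [hp, sq] using (coprime_of_prime_eq_sq_add_sq hp).pow_right 2

theorem div_sq_eq_neg_one (hp : p = a ^ 2 + b ^ 2) : (b / a : ZMod p) ^ 2 = -1 := by
  rw [div_pow, div_eq_iff (pow_ne_zero 2 (natCast_ne_zero_of_eq_sq_add_sq hp))]
  linear_combination natCast_sq_add_sq_eq_zero hp

theorem natCast_add_sq_eq_two_mul_div_mul_sq (hp : p = a ^ 2 + b ^ 2) :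
    ((a + b : ℕ) : ZMod p) ^ 2 = 2 * (b / a) * a ^ 2 := by
  have := natCast_ne_zero_of_eq_sq_add_sq hp
  field_simp
  push_cast
  linear_combination natCast_sq_add_sq_eq_zero hp

theorem natCast_pow_div_two_eq_one (hp : p = a ^ 2 + b ^ 2) (ha : Odd a) (hb : Even b) :
    (a : ZMod p) ^ (p / 2) = 1 := by
  have hJ : J(a | p) = 1 := hp ▸ jacobiSym_sq_add_sq_eq_one ha hb (coprime_of_prime_eq_sq_add_sq hp)
  rw [← Int.cast_natCast a, ← intCast_jacobiSym_eq_pow, hJ, Int.cast_one]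

theorem natCast_add_pow_div_two_eq_neg_one_pow (hp : p = a ^ 2 + b ^ 2) (ha : Odd a) (hb : Even b) :
    ((a + b : ℕ) : ZMod p) ^ (p / 2) = (-1) ^ (((a + b) ^ 2 - 1) / 8) := by
  have hJ : J((a + b : ℕ) | p) = ZMod.χ₈ (a + b : ℕ) :=
    hp ▸ jacobiSym_add_sq_add_sq_eq_χ₈ ha hb (coprime_of_prime_eq_sq_add_sq hp)
  rw [← Int.cast_natCast (a + b), ← intCast_jacobiSym_eq_pow, hJ,
    χ₈_eq_neg_one_pow (ha.add_even hb), Int.cast_pow, Int.cast_neg, Int.cast_one]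

theorem two_pow_eq_div_pow (hp : p = a ^ 2 + b ^ 2) (ha : Odd a) (hb : Even b) :
    (2 : ZMod p) ^ ((p - 1) / 4) = (b / a) ^ (a * b / 2) := by
  set f : ZMod p := b / a
  have hf : f ^ 2 = -1 := div_sq_eq_neg_one hp
  have hf0 : f ≠ 0 := by
    intro hf0
    simp [hf0] at hf
  have half : p / 2 = 2 * ((p - 1) / 4) := by
    have := sq_add_sq_mod_four_eq_one ha hb
    omega
  apply mul_right_cancel₀ (pow_ne_zero ((p - 1) / 4) hf0)
  calc (2 : ZMod p) ^ ((p - 1) / 4) * f ^ ((p - 1) / 4)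
      = (2 * f * a ^ 2) ^ ((p - 1) / 4) := by
        rw [mul_pow, mul_pow, ← pow_mul, ← half, natCast_pow_div_two_eq_one hp ha hb, mul_one]
    _ = ((a + b : ℕ) : ZMod p) ^ (p / 2) := by
        rw [← natCast_add_sq_eq_two_mul_div_mul_sq hp, ← pow_mul, ← half]
    _ = (f ^ 2) ^ (((a + b) ^ 2 - 1) / 8) := by
        rw [natCast_add_pow_div_two_eq_neg_one_pow hp ha hb, hf]
    _ = f ^ (a * b / 2) * f ^ ((p - 1) / 4) := by
        rw [← pow_mul, two_mul_add_sq_sub_one_div_eight ha hb, ← hp, add_comm, pow_add]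

theorem exists_pow_four_eq_two_iff (hp : p = a ^ 2 + b ^ 2) (ha : Odd a) (hb : Even b) :
    (∃ x : ZMod p, x ^ 4 = 2) ↔ 8 ∣ a * b := by
  have p_mod : p % 4 = 1 := hp ▸ sq_add_sq_mod_four_eq_one ha hb
  have hchar : ringChar (ZMod p) ≠ 2 := by
    rw [ZMod.ringChar_zmod_n]
    omega
  have card_mod : 4 ∣ Nat.card (ZMod p) - 1 := by
    rw [Nat.card_zmod]
    omega
  have mul_even : 2 ∣ a * b := hb.two_dvd.mul_left a
  rw [exists_pow_eq_iff_pow_card_sub_one_div_eq_one card_mod (Ring.two_ne_zero hchar),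
    Nat.card_zmod, two_pow_eq_div_pow hp ha hb, ← orderOf_dvd_iff_pow_eq_one,
    orderOf_eq_four_of_sq_eq_neg_one (Ring.neg_one_ne_one_of_char_ne_two hchar)
      (div_sq_eq_neg_one hp)]
  omega

end SumOfTwoSquares

theorem stmt11_general (p : ℕ) (hp : p.Prime) (hp2 : p ≠ 2) (A B : ℤ)
    (hAB : (p : ℤ) = A ^ 2 + B ^ 2) :
    (∃ x : ℤ, x ^ 4 ≡ 2 [ZMOD (p : ℤ)]) ↔ (8 : ℤ) ∣ A * B := by
  have : Fact p.Prime := ⟨hp⟩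
  have natAbs_sq : p = A.natAbs ^ 2 + B.natAbs ^ 2 := by
    zify
    simpa only [sq_abs] using hAB
  have parity : Odd (A.natAbs ^ 2 + B.natAbs ^ 2) := natAbs_sq ▸ hp.odd_of_ne_two hp2
  rw [exists_int_pow_modEq_iff, Int.cast_ofNat, ← Int.natAbs_dvd_natAbs, Int.natAbs_mul]
  rcases A.natAbs.even_or_odd with hA | hA
  · have hB : Odd B.natAbs := by grind
    rw [mul_comm]
    exact exists_pow_four_eq_two_iff (natAbs_sq.trans (add_comm _ _)) hB hA
  · have hB : Even B.natAbs := by grind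
    exact exists_pow_four_eq_two_iff natAbs_sq hA hB

/-- Quartic reciprocity for 2. Let `p ≡ 1 (mod 8)` be prime and `A`, `B` integers
with `p = A² + B²` and `4 ∣ A·B`. Then `2` is a quartic residue modulo `p` if and only if
`8 ∣ A·B`. -/
theorem stmt11 (p : ℕ) (hp : p.Prime) (h1 : p % 8 = 1)
    (A B : ℤ) (hAB : (p : ℤ) = A ^ 2 + B ^ 2) (h4 : (4 : ℤ) ∣ A * B) :
    (∃ x : ℤ, x ^ 4 ≡ 2 [ZMOD (p : ℤ)]) ↔ (8 : ℤ) ∣ A * B := by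
  exact stmt11_general p hp (by omega) A B hAB
end

section
/- Let p be a prime with p ≡ 1 (mod 8) and assume that 2 is not a quartic residue modulo p (i.e., there is no x with x⁴ ≡ 2 (mod p)). Then none of the three equations w² = −1 + 4·p·z⁴, w² = −2 + 2·p·z⁴, and w² = 2 − 2·p·z⁴ has a solution with z, w ∈ ℚ. -/
/-!
Clearing denominators turns a rational point into a primitive integral solution of
`d * V ^ 2 = T ^ 4 - p * Z ^ 4` with `d = ±2`, or of `a ^ 2 + b ^ 2 = p * Z ^ 4` with `Z` odd and
`8 ∣ b`. Each of these forces `2` to be a fourth power modulo `p`.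

In the first case `p` is a square modulo every odd prime factor of `V`, so by quadratic reciprocity
`V ≡ v ^ 2` modulo `p`, and `d ≡ (T / v) ^ 4`; moreover `-1` is a fourth power modulo `p`.

The second case is Dirichlet's proof of Gauss's criterion for the biquadratic character of `2`.
From `2 * p * m ^ 2 = (a + b) ^ 2 + (a - b) ^ 2` reciprocity gives `(a + b | p) = (2 | a + b)`,
which is `(-1) ^ ((p - 1) / 8)` since `(a + b) ^ 2 ≡ p` modulo `16`. On the other hand `b ≡ β ^ 2`
modulo `p`, so `a ^ 2 ≡ -b ^ 2` yields `(a + b) ^ 4 ≡ -4 * β ^ 8` and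
`(a + b | p) ≡ (-4) ^ ((p - 1) / 8)`. Hence `2 ^ ((p - 1) / 4) ≡ 1`, that is, `2` is a fourth power.
-/

theorem isRelPrime_of_sq_dvd_sub {R : Type*} [CommRing R] [DecompositionMonoid R] {p x y z : R}
    (hp : Squarefree p) (hxz : IsRelPrime x z) (h : y ^ 2 ∣ x ^ 2 - p * z ^ 2) :
    IsRelPrime x y := by
  intro q hqx hqy
  have hq : q ^ 2 ∣ p * z ^ 2 :=
    (dvd_sub_right (pow_dvd_pow_of_dvd hqx 2)).mp ((pow_dvd_pow_of_dvd hqy 2).trans h)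
  have hqz : IsRelPrime (q ^ 2) (z ^ 2) := (hxz.of_dvd_left hqx).pow
  exact hp q (sq q ▸ hqz.dvd_of_dvd_mul_right hq)

theorem exists_int_sq_eq_of_rat_sq_eq {a b : ℤ} {n : ℕ} {z w : ℚ}
    (h : w ^ 2 = a + b * z ^ (2 * n)) :
    ∃ W T Z : ℤ, IsCoprime T Z ∧ W ^ 2 = a * T ^ (2 * n) + b * Z ^ (2 * n) := by
  have hsq : ((a * z.den ^ (2 * n) + b * z.num ^ (2 * n) : ℤ) : ℚ) = (w * z.den ^ n) ^ 2 := by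
    push_cast
    rw [← Rat.mul_den_eq_num z, mul_pow w, h]
    ring
  obtain ⟨W, hW⟩ := Rat.isSquare_intCast_iff.mp (hsq ▸ IsSquare.sq (w * z.den ^ n))
  exact ⟨W, z.den, z.num, (Rat.isCoprime_num_den z).symm, by rw [hW, sq]⟩

section PowerResidues

theorem range_powMonoidHom_eq_ker_powMonoidHom {G : Type*} [CommGroup G] [IsCyclic G] [Finite G]
    {d : ℕ} (hd : d ∣ Nat.card G) :
    (powMonoidHom d : G →* G).range = (powMonoidHom (Nat.card G / d) : G →* G).ker := by
  refine Subgroup.eq_of_le_of_card_ge ?_ ?_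
  · rintro _ ⟨x, rfl⟩
    simp [MonoidHom.mem_ker, ← pow_mul, Nat.mul_div_cancel' hd]
  · rw [IsCyclic.card_powMonoidHom_ker, IsCyclic.card_powMonoidHom_range,
      Nat.gcd_eq_right hd, Nat.gcd_eq_right (Nat.div_dvd_of_dvd hd)]

theorem exists_pow_eq_of_pow_card_sub_one_div_eq_one {K : Type*} [Field K] [Finite K] {d : ℕ}
    (hd : d ∣ Nat.card K - 1) {a : K} (ha : a ^ ((Nat.card K - 1) / d) = 1) : ∃ x, x ^ d = a := by
  have hcard : Nat.card K - 1 ≠ 0 := by have := Finite.one_lt_card (α := K); omega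
  obtain ⟨u, rfl⟩ := IsUnit.of_pow_eq_one ha (Nat.div_ne_zero_iff_of_dvd hd |>.mpr
    ⟨hcard, ne_zero_of_dvd_ne_zero hcard hd⟩)
  rw [← Nat.card_units] at hd ha
  have hu : u ∈ (powMonoidHom (Nat.card Kˣ / d) : Kˣ →* Kˣ).ker := by
    ext; simpa using ha
  obtain ⟨x, hx⟩ := range_powMonoidHom_eq_ker_powMonoidHom hd ▸ hu
  exact ⟨x, by simp [← hx]⟩

end PowerResidues

section JacobiSymbol

open scoped NumberTheorySymbols

theorem jacobiSym_eq_one_of_dvd_mul_sq_sub_sq {c z s : ℤ} {n : ℕ}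
    (h : (n : ℤ) ∣ c * z ^ 2 - s ^ 2) (hs : IsCoprime s n) : J(c | n) = 1 := by
  have hJ : J(c * z ^ 2 | n) = 1 := by
    rw [jacobiSym.mod_left' (Int.emod_eq_emod_iff_emod_sub_eq_zero.mpr (Int.emod_eq_zero_of_dvd h)),
      jacobiSym.sq_one' (Int.isCoprime_iff_gcd_eq_one.mp hs)]
  rw [jacobiSym.mul_left, jacobiSym.pow_left] at hJ
  rcases jacobiSym.trichotomy z n with hz | hz | hz <;> simp_all

theorem jacobiSym_natAbs {p : ℕ} (hp : p % 4 = 1) (a : ℤ) : J((a.natAbs : ℤ) | p) = J(a | p) := by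
  rcases Int.natAbs_eq a with ha | ha
  · rw [← ha]
  · conv_rhs => rw [ha, jacobiSym.neg _ (Nat.odd_iff.mpr (by omega)),
      ZMod.χ₄_nat_one_mod_four hp, one_mul]

theorem jacobiSym_two_eq_neg_one_pow {n : ℕ} (hn : Odd n) : J(2 | n) = (-1) ^ (n ^ 2 / 8) := by
  have hparity : Even (n ^ 2 / 8) ↔ Even ((n % 8) ^ 2 / 8) := by
    obtain ⟨q, r, hr, rfl⟩ : ∃ q r, r < 8 ∧ n = 8 * q + r :=
      ⟨n / 8, n % 8, Nat.mod_lt _ (by norm_num), (Nat.div_add_mod n 8).symm⟩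
    have hdiv : (8 * q + r) ^ 2 / 8 = 2 * (4 * q ^ 2 + q * r) + r ^ 2 / 8 := by
      rw [show (8 * q + r) ^ 2 = r ^ 2 + 8 * (2 * (4 * q ^ 2 + q * r)) by ring,
        Nat.add_mul_div_left _ _ (by norm_num), add_comm]
    rw [Nat.mul_add_mod, Nat.mod_eq_of_lt hr, hdiv]
    simp [Nat.even_add]
  have hr : n % 8 < 8 := Nat.mod_lt _ (by norm_num)
  have hodd : n % 8 % 2 = 1 := by have := Nat.odd_iff.mp hn; omega
  rw [jacobiSym.at_two hn, ZMod.χ₈_nat_mod_eight, neg_one_pow_congr hparity]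
  generalize n % 8 = r at hr hodd
  interval_cases r <;> first | omega | decide

theorem jacobiSym_eq_one_of_dvd_natCast_mul_sq_sub_sq {p : ℕ} (hp : p % 8 = 1)
    {v z s : ℤ} (h : v ∣ p * z ^ 2 - s ^ 2) (hs : IsCoprime s v) : J(v | p) = 1 := by
  rcases eq_or_ne v 0 with rfl | hv
  · have hsq : (p : ℤ) * z ^ 2 = 1 := by
      rw [← Int.isUnit_sq (isCoprime_zero_right.mp hs)]
      linarith [zero_dvd_iff.mp h]
    have hp1 : p = 1 := by
      exact_mod_cast Int.eq_one_of_dvd_one p.cast_nonneg (Dvd.intro _ hsq)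
    rw [hp1, jacobiSym.one_right]
  · obtain ⟨k, n, hn, hvn⟩ := Nat.exists_eq_two_pow_mul_odd (Int.natAbs_ne_zero.mpr hv)
    have hnv : (n : ℤ) ∣ v := Int.natCast_dvd.mpr (hvn ▸ Nat.dvd_mul_left ..)
    have htwo : J(2 | p) = 1 := by
      rw [jacobiSym.at_two (Nat.odd_iff.mpr (by omega)), ZMod.χ₈_nat_mod_eight, hp]
      decide
    calc J(v | p) = J(2 | p) ^ k * J((n : ℤ) | p) := by
          rw [← jacobiSym_natAbs (by omega), hvn, Nat.cast_mul, jacobiSym.mul_left, Nat.cast_pow,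
            jacobiSym.pow_left, Nat.cast_ofNat]
      _ = J((p : ℤ) | n) := by
          rw [htwo, one_pow, one_mul, jacobiSym.quadratic_reciprocity_one_mod_four (by omega) hn]
      _ = 1 := jacobiSym_eq_one_of_dvd_mul_sq_sub_sq (hnv.trans h)
          (hs.of_isCoprime_of_dvd_right hnv)

theorem exists_sq_eq_intCast_of_dvd_mul_sq_sub_sq {p : ℕ} [Fact p.Prime] (hp : p % 8 = 1)
    {v z s : ℤ} (h : v ∣ p * z ^ 2 - s ^ 2) (hs : IsCoprime s v) :
    ∃ r : ZMod p, r ≠ 0 ∧ r ^ 2 = v := by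
  have hJ := jacobiSym_eq_one_of_dvd_natCast_mul_sq_sub_sq hp h hs
  obtain ⟨r, hr⟩ := ZMod.isSquare_of_jacobiSym_eq_one hJ
  refine ⟨r, ?_, by rw [hr, sq]⟩
  rintro rfl
  rw [← jacobiSym.legendreSym.to_jacobiSym, (legendreSym.eq_zero_iff p v).mpr (by simpa using hr)]
    at hJ
  exact zero_ne_one hJ

theorem jacobiSym_add_of_sq_add_sq_eq {p : ℕ} (hp : p % 4 = 1) {a b m : ℤ}
    (h : a ^ 2 + b ^ 2 = p * m ^ 2) (hab : IsCoprime a b) (hodd : Odd (a + b)) :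
    J(a + b | p) = J(2 | (a + b).natAbs) := by
  have hcop : IsCoprime (a - b) (a + b) := by
    have hsub : a - b = -(2 * b) + (a + b) * 1 := by ring
    rw [hsub, IsCoprime.add_mul_left_left_iff, IsCoprime.neg_left_iff]
    refine ((Int.isCoprime_two_left).mpr hodd).mul_left ?_
    simpa using hab.symm.add_mul_left_right 1
  have hJ : J(2 * p | (a + b).natAbs) = 1 := by
    refine jacobiSym_eq_one_of_dvd_mul_sq_sub_sq (z := m) (s := a - b)
      (Int.natAbs_dvd.mpr ⟨a + b, by linear_combination -2 * h⟩) ?_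
    rwa [Int.natCast_natAbs, IsCoprime.abs_right_iff]
  have hmul : J(2 | (a + b).natAbs) * J(a + b | p) = 1 := by
    rwa [← jacobiSym_natAbs hp, ← jacobiSym.quadratic_reciprocity_one_mod_four hp
      (Int.natAbs_odd.mpr hodd), ← jacobiSym.mul_left]
  rcases Int.mul_eq_one_iff_eq_one_or_neg_one.mp hmul with ⟨h₁, h₂⟩ | ⟨h₁, h₂⟩ <;> rw [h₁, h₂]

theorem jacobiSym_add_eq_neg_one_pow_of_sq_add_sq_eq {p : ℕ} (hp : p % 8 = 1) {a b m : ℤ}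
    (h : a ^ 2 + b ^ 2 = p * m ^ 2) (hab : IsCoprime a b) (hb : 8 ∣ b)
    (hm : m ^ 2 ≡ 1 [ZMOD 16]) : J(a + b | p) = (-1) ^ (p / 8) := by
  have hsq : (a + b) ^ 2 ≡ p [ZMOD 16] := by
    obtain ⟨c, rfl⟩ := hb
    calc (a + 8 * c) ^ 2 = p * m ^ 2 + 16 * (a * c) := by linear_combination h
      _ ≡ p * m ^ 2 [ZMOD 16] := by simp [Int.ModEq]
      _ ≡ p * 1 [ZMOD 16] := hm.mul_left _
      _ = p := mul_one _
  have hnat : (a + b).natAbs ^ 2 % 16 = p % 16 := by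
    rw [← Int.natAbs_sq] at hsq
    exact_mod_cast hsq
  have hodd : Odd (a + b).natAbs := by
    rw [← Nat.odd_pow_iff two_ne_zero, Nat.odd_iff]
    omega
  rw [jacobiSym_add_of_sq_add_sq_eq (by omega) h hab (Int.natAbs_odd.mp hodd),
    jacobiSym_two_eq_neg_one_pow hodd]
  refine neg_one_pow_congr ?_
  rw [Nat.even_iff, Nat.even_iff]
  omega

end JacobiSymbol

section TwoAdic

theorem pow_four_modEq_one_of_odd {n : ℤ} (hn : Odd n) : n ^ 4 ≡ 1 [ZMOD 16] := by
  obtain ⟨c, hc⟩ := Int.eight_dvd_sq_sub_one_of_odd hn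
  refine (Int.modEq_iff_dvd.mpr ⟨4 * c ^ 2 + c, ?_⟩).symm
  linear_combination (n ^ 2 + 8 * c + 1) * hc

theorem even_and_even_of_four_dvd_sq_add_sq {x y : ℤ} (h : 4 ∣ x ^ 2 + y ^ 2) :
    Even x ∧ Even y := by
  rcases Int.even_or_odd x with hx | hx <;> rcases Int.even_or_odd y with hy | hy
  · exact ⟨hx, hy⟩
  · have := Int.sq_mod_four_eq_one_of_odd hy
    obtain ⟨k, rfl⟩ := hx.two_dvd
    ring_nf at h
    omega
  · have := Int.sq_mod_four_eq_one_of_odd hx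
    obtain ⟨k, rfl⟩ := hy.two_dvd
    ring_nf at h
    omega
  · have := Int.sq_mod_four_eq_one_of_odd hx
    have := Int.sq_mod_four_eq_one_of_odd hy
    omega

theorem even_of_sq_add_four_mul_pow_four_eq {p V t Z : ℤ} (hp : p % 8 = 1) (hZ : Odd Z)
    (h : V ^ 2 + 4 * t ^ 4 = p * Z ^ 4) : Even t := by
  have hpZ : p * Z ^ 4 ≡ 1 * 1 [ZMOD 8] :=
    Int.ModEq.mul hp ((pow_four_modEq_one_of_odd hZ).of_dvd (by norm_num))
  rw [← h, Int.ModEq] at hpZ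
  have hV : Odd V := by
    rw [← Int.odd_pow' two_ne_zero, Int.odd_iff]
    omega
  obtain ⟨c, hc⟩ := Int.eight_dvd_sq_sub_one_of_odd hV
  rw [← Int.even_pow' four_ne_zero, Int.even_iff]
  omega

end TwoAdic

section BiquadraticCharacter

variable {p : ℕ} [Fact p.Prime]

theorem exists_pow_four_eq_neg_one (hp : p % 8 = 1) : ∃ x : ZMod p, x ^ 4 = -1 := by
  obtain ⟨k, hk⟩ : ∃ k, p = 8 * k + 1 := ⟨p / 8, by omega⟩
  refine exists_pow_eq_of_pow_card_sub_one_div_eq_one ?_ ?_ <;> rw [Nat.card_zmod]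
  · omega
  · rw [show (p - 1) / 4 = 2 * k by omega, pow_mul, neg_one_sq, one_pow]

theorem exists_pow_four_eq_intCast_of_mul_sq_eq (hp : p % 8 = 1) {d T V Z : ℤ}
    (hTZ : IsCoprime T Z) (h : d * V ^ 2 = T ^ 4 - p * Z ^ 4) : ∃ x : ZMod p, x ^ 4 = d := by
  have hp_sqfree : Squarefree (p : ℤ) := (Nat.prime_iff_prime_int.mp Fact.out).squarefree
  have hTV : IsCoprime (T ^ 2) V :=
    (isRelPrime_of_sq_dvd_sub hp_sqfree hTZ.pow.isRelPrime (z := Z ^ 2)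
      ⟨d, by linear_combination -h⟩).isCoprime
  obtain ⟨v, hv, hvV⟩ := exists_sq_eq_intCast_of_dvd_mul_sq_sub_sq hp (z := Z ^ 2)
    ⟨-d * V, by linear_combination h⟩ hTV
  have hmod : (d : ZMod p) * V ^ 2 = T ^ 4 := by
    simpa using congrArg (Int.cast : ℤ → ZMod p) h
  refine ⟨T / v, ?_⟩
  rw [div_pow, div_eq_iff (pow_ne_zero 4 hv), ← hmod, ← hvV]
  ring

theorem exists_pow_four_eq_intCast_of_sq_eq_mul (hp : p % 8 = 1) {d T W Z : ℤ}
    (hd : Squarefree d) (hTZ : IsCoprime T Z) (h : W ^ 2 = d * (T ^ 4 - p * Z ^ 4)) :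
    ∃ x : ZMod p, x ^ 4 = d := by
  obtain ⟨V, rfl⟩ : d ∣ W := (hd.dvd_pow_iff_dvd two_ne_zero).mp (h ▸ dvd_mul_right ..)
  refine exists_pow_four_eq_intCast_of_mul_sq_eq hp hTZ (V := V) (mul_left_cancel₀ hd.ne_zero ?_)
  linear_combination h

theorem exists_pow_four_eq_two_of_sq_add_sq_eq (hp : p % 8 = 1) {a b m : ℤ}
    (h : a ^ 2 + b ^ 2 = p * m ^ 2) (hab : IsCoprime a b) (hb : 8 ∣ b)
    (hm : m ^ 2 ≡ 1 [ZMOD 16]) : ∃ x : ZMod p, x ^ 4 = 2 := by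
  obtain ⟨k, hk⟩ : ∃ k, p = 8 * k + 1 := ⟨p / 8, by omega⟩
  obtain ⟨β, hβ, hβb⟩ := exists_sq_eq_intCast_of_dvd_mul_sq_sub_sq hp (z := m) (s := a)
    ⟨b, by linear_combination -h⟩ hab
  have hfermat : β ^ (8 * k) = 1 := by
    rw [show 8 * k = p - 1 by omega, ZMod.pow_card_sub_one_eq_one hβ]
  have hmod : (a : ZMod p) ^ 2 + b ^ 2 = 0 := by
    simpa using congrArg (Int.cast : ℤ → ZMod p) h
  have hfour : ((a + b : ℤ) : ZMod p) ^ 4 = -1 * 2 ^ 2 * β ^ 8 := by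
    push_cast
    rw [show β ^ 8 = (β ^ 2) ^ 4 by ring, hβb]
    linear_combination (a ^ 2 + 4 * a * b + 5 * b ^ 2 : ZMod p) * hmod
  have heuler : ((a + b : ℤ) : ZMod p) ^ (4 * k) = (-1) ^ k := by
    have hleg := legendreSym.eq_pow p (a + b)
    rw [jacobiSym.legendreSym.to_jacobiSym,
      jacobiSym_add_eq_neg_one_pow_of_sq_add_sq_eq hp h hab hb hm] at hleg
    rw [show p / 8 = k by omega, show p / 2 = 4 * k by omega] at hleg
    exact_mod_cast hleg.symm
  have htwo : (2 : ZMod p) ^ (2 * k) = 1 := by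
    rw [pow_mul, hfour, mul_pow, mul_pow, ← pow_mul, ← pow_mul, hfermat, mul_one] at heuler
    exact mul_left_cancel₀ (pow_ne_zero k (neg_ne_zero.mpr one_ne_zero)) (by rw [heuler, mul_one])
  refine exists_pow_eq_of_pow_card_sub_one_div_eq_one ?_ ?_ <;> rw [Nat.card_zmod]
  · omega
  · rw [show (p - 1) / 4 = 2 * k by omega, htwo]

theorem exists_pow_four_eq_two_of_sq_eq_neg_add (hp : p % 8 = 1) {W T Z : ℤ}
    (hTZ : IsCoprime T Z) (h : W ^ 2 = -T ^ 4 + 4 * p * Z ^ 4) :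
    ∃ x : ZMod p, x ^ 4 = 2 := by
  obtain ⟨hW, hT⟩ := even_and_even_of_four_dvd_sq_add_sq (x := W) (y := T ^ 2)
    ⟨p * Z ^ 4, by linear_combination h⟩
  obtain ⟨V, rfl⟩ := hW.two_dvd
  obtain ⟨t, rfl⟩ := ((Int.even_pow' two_ne_zero).mp hT).two_dvd
  have hV : V ^ 2 + 4 * t ^ 4 = p * Z ^ 4 := by linarith
  have hZ : Odd Z := Int.isCoprime_two_left.mp hTZ.of_mul_left_left
  obtain ⟨u, rfl⟩ := (even_of_sq_add_four_mul_pow_four_eq (by omega) hZ hV).two_dvd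
  have hp_sqfree : Squarefree (p : ℤ) := (Nat.prime_iff_prime_int.mp Fact.out).squarefree
  have hbZ : IsCoprime (2 * (2 * u) ^ 2) (Z ^ 2) :=
    (hTZ.of_mul_left_left.mul_left hTZ.of_mul_left_right.pow_left).pow_right
  have hab : IsCoprime V (2 * (2 * u) ^ 2) :=
    (isRelPrime_of_sq_dvd_sub hp_sqfree hbZ.isRelPrime
      ⟨-1, by linear_combination hV⟩).isCoprime.symm
  refine exists_pow_four_eq_two_of_sq_add_sq_eq hp (m := Z ^ 2) (by linear_combination hV) hab
    ⟨u ^ 2, by ring⟩ ?_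
  rw [← pow_mul]
  exact pow_four_modEq_one_of_odd hZ

end BiquadraticCharacter

/-- Let `p ≡ 1 (mod 8)` be prime such that `2` is not a quartic residue modulo `p`.
Then none of the equations `w² = −1 + 4pz⁴`, `w² = −2 + 2pz⁴`, `w² = 2 − 2pz⁴` has a rational
solution. -/
theorem stmt12 (p : ℕ) (hp : p.Prime) (h1 : p % 8 = 1)
    (hq : ¬ ∃ x : ℤ, x ^ 4 ≡ 2 [ZMOD (p : ℤ)]) :
    (¬ ∃ z w : ℚ, w ^ 2 = -1 + 4 * (p : ℚ) * z ^ 4) ∧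
    (¬ ∃ z w : ℚ, w ^ 2 = -2 + 2 * (p : ℚ) * z ^ 4) ∧
    (¬ ∃ z w : ℚ, w ^ 2 = 2 - 2 * (p : ℚ) * z ^ 4) := by
  have : Fact p.Prime := ⟨hp⟩
  have hq' : ¬ ∃ x : ZMod p, x ^ 4 = 2 := by
    rintro ⟨x, hx⟩
    refine hq ⟨x.val, (ZMod.intCast_eq_intCast_iff _ _ p).mp ?_⟩
    simp [hx]
  refine ⟨?_, ?_, ?_⟩ <;> rintro ⟨z, w, h⟩ <;> apply hq'
  · obtain ⟨W, T, Z, hTZ, hW⟩ :=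
      exists_int_sq_eq_of_rat_sq_eq (a := -1) (b := 4 * p) (n := 2) (mod_cast h)
    have hW' : W ^ 2 = -T ^ 4 + 4 * p * Z ^ 4 := by linear_combination hW
    exact exists_pow_four_eq_two_of_sq_eq_neg_add h1 hTZ hW'
  · obtain ⟨W, T, Z, hTZ, hW⟩ :=
      exists_int_sq_eq_of_rat_sq_eq (a := -2) (b := 2 * p) (n := 2) (mod_cast h)
    have hW' : W ^ 2 = -2 * (T ^ 4 - p * Z ^ 4) := by linear_combination hW
    obtain ⟨x, hx⟩ :=
      exists_pow_four_eq_intCast_of_sq_eq_mul h1 Int.prime_two.neg.squarefree hTZ hW'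
    obtain ⟨e, he⟩ := exists_pow_four_eq_neg_one h1
    exact ⟨e * x, by simp [mul_pow, he, hx]⟩
  · obtain ⟨W, T, Z, hTZ, hW⟩ := exists_int_sq_eq_of_rat_sq_eq (z := z) (w := w)
      (a := 2) (b := -2 * p) (n := 2) (by push_cast; linear_combination h)
    have hW' : W ^ 2 = 2 * (T ^ 4 - p * Z ^ 4) := by linear_combination hW
    exact mod_cast exists_pow_four_eq_intCast_of_sq_eq_mul h1 Int.prime_two.squarefree hTZ hW'
end

section
/- Let p be a prime with p ≡ 1 (mod 8). Let r, t be coprime integers, let s be an integer with s² = p·r⁴ − 4·t⁴, and let A, B be integers with A ≡ 1 (mod 4), B ≡ 0 (mod 4), and p = A² + B². Then g := gcd(p·r² + 2·B·t² + A·s, p·r² + 2·B·t² − A·s) is a perfect square or twice a perfect square; that is, there exists an integer m with g = m² or g = 2·m². -/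
/-!
Write `X` and `Y` for the two numbers and `N = B r² + 2 t²`, and let `h` be an odd common divisor of
`X` and `Y`. Squarefreeness of `n = A² + B²` and coprimality of `r` and `t` make `h` coprime to `n`,
so `X Y = n N²` gives `h ∣ N`; it follows that `h` is coprime to `r` and divides `A²`, `A s` and
`s²`. Hence `c = gcd (A, s, h)` satisfies `h ∣ c²`. On the other hand `2 r² X = (A r² + s)² + N²`,
and likewise for `Y` with `-s`, so `c²` divides both `X` and `Y`. Taking for `h` the odd part of
`gcd (X, Y)` forces `h = c²`.
-/

section GCDMonoid

variable {M : Type*} [CommMonoidWithZero M] [GCDMonoid M]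

theorem dvd_gcd_sq_of_dvd {h a b : M} (haa : h ∣ a ^ 2) (hab : h ∣ a * b) (hbb : h ∣ b ^ 2) :
    h ∣ gcd a b ^ 2 := by
  have ha : h ∣ a * gcd a b := (dvd_gcd (sq a ▸ haa) hab).trans (gcd_mul_left' a a b).dvd
  have hb : h ∣ b * gcd a b :=
    (dvd_gcd (mul_comm a b ▸ hab) (sq b ▸ hbb)).trans (gcd_mul_left' b a b).dvd
  exact sq (gcd a b) ▸ (dvd_gcd ha hb).trans (gcd_mul_right' (gcd a b) a b).dvd

end GCDMonoid

section CommRing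

variable {R : Type*} [CommRing R] {n A B r s t : R}

theorem add_mul_sub_eq_mul_sq (hn : n = A ^ 2 + B ^ 2) (hs : s ^ 2 = n * r ^ 4 - 4 * t ^ 4) :
    (n * r ^ 2 + 2 * B * t ^ 2 + A * s) * (n * r ^ 2 + 2 * B * t ^ 2 - A * s) =
      n * (B * r ^ 2 + 2 * t ^ 2) ^ 2 := by
  subst hn
  linear_combination (-A ^ 2) * hs

theorem two_mul_sq_mul_add_eq_sq_add_sq (hn : n = A ^ 2 + B ^ 2)
    (hs : s ^ 2 = n * r ^ 4 - 4 * t ^ 4) :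
    2 * r ^ 2 * (n * r ^ 2 + 2 * B * t ^ 2 + A * s) =
      (A * r ^ 2 + s) ^ 2 + (B * r ^ 2 + 2 * t ^ 2) ^ 2 := by
  subst hn
  linear_combination -hs

variable [DecompositionMonoid R] {h : R}

theorem dvd_and_dvd_of_dvd_add_of_dvd_sub {x y : R} (h2 : IsRelPrime h 2) (hadd : h ∣ x + y)
    (hsub : h ∣ x - y) : h ∣ x ∧ h ∣ y := by
  constructor <;> refine h2.dvd_of_dvd_mul_left ?_
  · simpa only [add_add_sub_cancel, ← two_mul] using dvd_add hadd hsub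
  · simpa only [add_sub_sub_cancel, ← two_mul] using dvd_sub hadd hsub

theorem isRelPrime_sq_add_sq_right (hsq : Squarefree (A ^ 2 + B ^ 2)) :
    IsRelPrime (A ^ 2 + B ^ 2) B := by
  intro d hdn hdB
  have hdA : d ∣ A := (hsq.squarefree_of_dvd hdn).isRadical 2 A
    ((dvd_add_left (dvd_pow hdB two_ne_zero)).mp hdn)
  exact hsq d (by simpa only [sq] using dvd_add (mul_dvd_mul hdA hdA) (mul_dvd_mul hdB hdB))

theorem isRelPrime_of_dvd_mul_sq_add_mul_sq (hn : n = A ^ 2 + B ^ 2) (hsq : Squarefree n)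
    (hrt : IsRelPrime r t) (hs : s ^ 2 = n * r ^ 4 - 4 * t ^ 4) (h2 : IsRelPrime h 2)
    (hh : h ∣ n * r ^ 2 + 2 * B * t ^ 2) : IsRelPrime h n := by
  intro d hdh hdn
  have hd : Squarefree d := hsq.squarefree_of_dvd hdn
  have hdB : IsRelPrime d B := (hn ▸ isRelPrime_sq_add_sq_right (hn ▸ hsq)).of_dvd_left hdn
  have hdt : d ∣ t := by
    have hdBt : d ∣ 2 * B * t ^ 2 := (dvd_add_right (hdn.mul_right _)).mp (hdh.trans hh)
    exact hd.isRadical 2 t (((h2.of_dvd_left hdh).mul_right hdB).dvd_of_dvd_mul_left hdBt)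
  have hds : d ∣ s := hd.isRadical 2 s <|
    hs ▸ dvd_sub (hdn.mul_right _) ((dvd_pow hdt four_ne_zero).mul_left 4)
  have hddn : d ^ 2 ∣ n * r ^ 4 := by
    rw [← sub_add_cancel (n * r ^ 4) (4 * t ^ 4), ← hs]
    exact dvd_add (pow_dvd_pow_of_dvd hds 2)
      (((pow_dvd_pow d (by norm_num)).trans (pow_dvd_pow_of_dvd hdt 4)).mul_left 4)
  have hdr : IsRelPrime (d ^ 2) (r ^ 4) := (hrt.symm.of_dvd_left hdt).pow
  exact hsq d (sq d ▸ hdr.dvd_of_dvd_mul_right hddn)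

theorem isRelPrime_of_dvd_mul_sq_add_two_mul_sq (hrt : IsRelPrime r t) (h2 : IsRelPrime h 2)
    (hh : h ∣ B * r ^ 2 + 2 * t ^ 2) : IsRelPrime h r := by
  intro d hdh hdr
  have hdt : d ∣ 2 * t ^ 2 :=
    (dvd_add_right ((dvd_pow hdr two_ne_zero).mul_left B)).mp (hdh.trans hh)
  exact (hrt.of_dvd_left hdr).pow_right.isUnit_of_dvd
    ((h2.of_dvd_left hdh).dvd_of_dvd_mul_left hdt)

theorem sq_dvd_mul_sq_add_mul (hn : n = A ^ 2 + B ^ 2) (hs : s ^ 2 = n * r ^ 4 - 4 * t ^ 4)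
    (h2 : IsRelPrime h 2) (hr : IsRelPrime h r) (hA : h ∣ A) (hhs : h ∣ s)
    (hN : h ∣ B * r ^ 2 + 2 * t ^ 2) : h ^ 2 ∣ n * r ^ 2 + 2 * B * t ^ 2 + A * s := by
  refine (h2.mul_right hr.pow_right).pow_left.dvd_of_dvd_mul_left (y := 2 * r ^ 2) ?_
  rw [two_mul_sq_mul_add_eq_sq_add_sq hn hs]
  exact dvd_add (pow_dvd_pow_of_dvd (dvd_add (hA.mul_right _) hhs) 2) (pow_dvd_pow_of_dvd hN 2)

end CommRing

section GCDDomain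

variable {R : Type*} [CommRing R] [IsDomain R] [IsGCDMonoid R] {n A B r s t h : R}

theorem dvd_mul_sq_add_two_mul_sq (hn : n = A ^ 2 + B ^ 2) (hs : s ^ 2 = n * r ^ 4 - 4 * t ^ 4)
    (hhn : IsRelPrime h n) (hX : h ∣ n * r ^ 2 + 2 * B * t ^ 2 + A * s)
    (hY : h ∣ n * r ^ 2 + 2 * B * t ^ 2 - A * s) : h ∣ B * r ^ 2 + 2 * t ^ 2 := by
  have hsq : h ^ 2 ∣ n * (B * r ^ 2 + 2 * t ^ 2) ^ 2 := by
    rw [← add_mul_sub_eq_mul_sq hn hs, sq]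
    exact mul_dvd_mul hX hY
  exact (IsIntegrallyClosed.pow_dvd_pow_iff two_ne_zero).mp
    (hhn.pow_left.dvd_of_dvd_mul_left hsq)

theorem exists_dvd_sq_and_sq_dvd_of_isRelPrime_two (hn : n = A ^ 2 + B ^ 2) (hsq : Squarefree n)
    (hrt : IsRelPrime r t) (hs : s ^ 2 = n * r ^ 4 - 4 * t ^ 4) (h2 : IsRelPrime h 2)
    (hX : h ∣ n * r ^ 2 + 2 * B * t ^ 2 + A * s) (hY : h ∣ n * r ^ 2 + 2 * B * t ^ 2 - A * s) :
    ∃ c, c ∣ h ∧ h ∣ c ^ 2 ∧ c ^ 2 ∣ n * r ^ 2 + 2 * B * t ^ 2 + A * s ∧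
      c ^ 2 ∣ n * r ^ 2 + 2 * B * t ^ 2 - A * s := by
  obtain ⟨_⟩ := ‹IsGCDMonoid R›
  obtain ⟨hP, hAs⟩ := dvd_and_dvd_of_dvd_add_of_dvd_sub h2 hX hY
  have hhn : IsRelPrime h n := isRelPrime_of_dvd_mul_sq_add_mul_sq hn hsq hrt hs h2 hP
  have hN : h ∣ B * r ^ 2 + 2 * t ^ 2 := dvd_mul_sq_add_two_mul_sq hn hs hhn hX hY
  have hr : IsRelPrime h r := isRelPrime_of_dvd_mul_sq_add_two_mul_sq hrt h2 hN
  have hAA : h ∣ A ^ 2 := by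
    refine hr.pow_right.dvd_of_dvd_mul_right (z := r ^ 2) ?_
    convert dvd_sub hP (hN.mul_left B) using 1
    rw [hn]; ring
  have hss : h ∣ s ^ 2 := by
    convert dvd_add (hAA.mul_right (r ^ 4)) (hN.mul_left (B * r ^ 2 - 2 * t ^ 2)) using 1
    rw [hs, hn]; ring
  set c := gcd (gcd A s) h
  have hch : c ∣ h := gcd_dvd_right _ _
  have hcA : c ∣ A := (gcd_dvd_left _ _).trans (gcd_dvd_left _ _)
  have hcs : c ∣ s := (gcd_dvd_left _ _).trans (gcd_dvd_right _ _)
  have hhc : h ∣ c ^ 2 :=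
    dvd_gcd_sq_of_dvd (dvd_gcd_sq_of_dvd hAA hAs hss) (dvd_mul_left _ _)
      (dvd_pow_self h two_ne_zero)
  refine ⟨c, hch, hhc, ?_, ?_⟩
  · exact sq_dvd_mul_sq_add_mul hn hs (h2.of_dvd_left hch) (hr.of_dvd_left hch) hcA hcs
      (hch.trans hN)
  · simpa only [mul_neg, ← sub_eq_add_neg] using
      sq_dvd_mul_sq_add_mul hn (s := -s) ((neg_sq s).trans hs) (h2.of_dvd_left hch)
        (hr.of_dvd_left hch) hcA (dvd_neg.mpr hcs) (hch.trans hN)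

end GCDDomain

theorem exists_eq_sq_or_two_mul_sq_of_odd_dvd {g : ℕ}
    (hg : ∀ h, Odd h → h ∣ g → ∃ c, c ∣ h ∧ h ∣ c ^ 2 ∧ c ^ 2 ∣ g) :
    ∃ m, g = m ^ 2 ∨ g = 2 * m ^ 2 := by
  obtain rfl | hg0 := eq_or_ne g 0
  · exact ⟨0, Or.inl rfl⟩
  obtain ⟨k, h, hodd, rfl⟩ := Nat.exists_eq_two_pow_mul_odd hg0
  obtain ⟨c, hch, hhc, hcg⟩ := hg h hodd (dvd_mul_left _ _)
  have hcop : (c ^ 2).Coprime (2 ^ k) :=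
    Nat.Coprime.pow 2 k (hodd.coprime_two_right.coprime_dvd_left hch)
  obtain rfl : h = c ^ 2 := Nat.dvd_antisymm hhc (hcop.dvd_of_dvd_mul_left hcg)
  obtain ⟨j, rfl | rfl⟩ := Nat.even_or_odd' k
  · exact ⟨2 ^ j * c, Or.inl (by ring)⟩
  · exact ⟨2 ^ j * c, Or.inr (by ring)⟩

theorem stmt13_general {n r t s A B : ℤ} (hsq : Squarefree n) (hrt : IsCoprime r t)
    (hs : s ^ 2 = n * r ^ 4 - 4 * t ^ 4) (hn : n = A ^ 2 + B ^ 2) :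
    ∃ m : ℤ,
      (Int.gcd (n * r ^ 2 + 2 * B * t ^ 2 + A * s) (n * r ^ 2 + 2 * B * t ^ 2 - A * s) : ℤ) =
        m ^ 2 ∨
      (Int.gcd (n * r ^ 2 + 2 * B * t ^ 2 + A * s) (n * r ^ 2 + 2 * B * t ^ 2 - A * s) : ℤ) =
        2 * m ^ 2 := by
  obtain ⟨m, hm⟩ := exists_eq_sq_or_two_mul_sq_of_odd_dvd
    (g := Int.gcd (n * r ^ 2 + 2 * B * t ^ 2 + A * s) (n * r ^ 2 + 2 * B * t ^ 2 - A * s)) <| by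
    intro h hodd hhg
    have h2 : IsRelPrime (h : ℤ) 2 :=
      (Int.isCoprime_two_right.mpr (by exact_mod_cast hodd)).isRelPrime
    obtain ⟨hX, hY⟩ := Int.dvd_coe_gcd_iff.mp (Int.natCast_dvd_natCast.mpr hhg)
    obtain ⟨c, hch, hhc, hcX, hcY⟩ :=
      exists_dvd_sq_and_sq_dvd_of_isRelPrime_two hn hsq hrt.isRelPrime hs h2 hX hY
    refine ⟨c.natAbs, Int.natAbs_dvd_natAbs.mpr hch, ?_, ?_⟩
    · simpa only [Int.natAbs_pow, Int.natAbs_natCast] using Int.natAbs_dvd_natAbs.mpr hhc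
    · simpa only [Int.natAbs_pow, Int.natAbs_natCast] using
        Int.natAbs_dvd_natAbs.mpr (Int.dvd_coe_gcd hcX hcY)
  exact ⟨m, by exact_mod_cast hm⟩

/-- Let `p ≡ 1 (mod 8)` be prime, `r`, `t` coprime integers, `s` an integer with
`s² = p·r⁴ − 4·t⁴`, and `A`, `B` integers with `A ≡ 1 (mod 4)`, `B ≡ 0 (mod 4)` and
`p = A² + B²`. Then `gcd(p·r² + 2·B·t² + A·s, p·r² + 2·B·t² − A·s)` is a perfect square or
twice a perfect square. -/
theorem stmt13 (p : ℕ) (hp : p.Prime) (h1 : p % 8 = 1)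
    (r t : ℤ) (hrt : IsCoprime r t) (s : ℤ) (hs : s ^ 2 = (p : ℤ) * r ^ 4 - 4 * t ^ 4)
    (A B : ℤ) (hA : A ≡ 1 [ZMOD 4]) (hB : B ≡ 0 [ZMOD 4]) (hpAB : (p : ℤ) = A ^ 2 + B ^ 2) :
    ∃ m : ℤ,
      (Int.gcd ((p : ℤ) * r ^ 2 + 2 * B * t ^ 2 + A * s)
          ((p : ℤ) * r ^ 2 + 2 * B * t ^ 2 - A * s) : ℤ) = m ^ 2 ∨
      (Int.gcd ((p : ℤ) * r ^ 2 + 2 * B * t ^ 2 + A * s)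
          ((p : ℤ) * r ^ 2 + 2 * B * t ^ 2 - A * s) : ℤ) = 2 * m ^ 2 :=
  stmt13_general (Nat.prime_iff_prime_int.mp hp).squarefree hrt hs hpAB
end
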